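/- arXiv:1104.1231 — 4 statements merged into one kernel-verified Lean document; each statement's English description precedes it below -/
import Mathlib

section
/- Let Γ be a connected infinite graph whose vertices have uniformly bounded degree. Then Γ admits a transitive translation-like action by ℤ if and only if Γ has at most two ends. -/
open scoped Pointwise

/-- A right action of a group `H` on a type `X`. -/
structure RightAction (H X : Type*) [Group H] where
  act : X → H → X
  act_one : ∀ x, act x 1 = x
  act_mul : ∀ x h k, act (act x h) k = act x (h * k)

/-- A right action is translation-like w.r.t. a distance function `d` if it is free and
every element moves points a uniformly bounded distance. -/
def RightAction.IsTranslationLike {H X : Type*} [Group H]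
    (a : RightAction H X) (d : X → X → ℝ) : Prop :=
  (∀ (x : X) (h : H), a.act x h = x → h = 1) ∧
  (∀ h : H, ∃ C : ℝ, ∀ x : X, d x (a.act x h) ≤ C)

/-- A right action is transitive if any point can be moved to any other point. -/
def RightAction.IsTransitive {H X : Type*} [Group H] (a : RightAction H X) : Prop :=
  ∀ x y : X, ∃ h : H, a.act x h = y

/-- The path-length distance on the vertices of a graph, as a real-valued function. -/
noncomputable def graphDist {V : Type*} (Γ : SimpleGraph V) : V → V → ℝ :=
  fun u v => (Γ.dist u v : ℝ)

/-- The graph `Γ` has at most `m` ends: for every finite set `A` of edges, the graph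
`Γ − A` has at most `m` infinite connected components. -/
def graphEndsLE {V : Type*} (Γ : SimpleGraph V) (m : ℕ) : Prop :=
  ∀ A : Finset (Sym2 V),
    {c : (Γ.deleteEdges (A : Set (Sym2 V))).ConnectedComponent | c.supp.Infinite}.encard ≤ m

namespace TZ

def Conn {V : Type*} (G : SimpleGraph V) (S : Set V) : Prop :=
  ∀ T ⊆ S, T.Nonempty → (∀ x ∈ T, ∀ y ∈ S, G.Adj x y → y ∈ T) → S ⊆ T

inductive RTree {V : Type*} (G : SimpleGraph V) : Set V → V → Prop
  | single (p : V) : RTree G {p} p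
  | join (P : Set V) (p : V) (K : Set V) (k : V) : RTree G P p → RTree G K k →
      Disjoint P K → G.Adj p k → RTree G (P ∪ K) p

inductive Cat {V : Type*} (G : SimpleGraph V) : Set V → V → V → Prop
  | base (P : Set V) (p : V) : RTree G P p → Cat G P p p
  | join (P : Set V) (p : V) (K : Set V) (k s : V) : RTree G P p → Cat G K k s →
      Disjoint P K → G.Adj p k → Cat G (P ∪ K) p s

section
variable {V : Type*} {G : SimpleGraph V}

theorem conn_single (p : V) : Conn G {p} := by
  intro T hT hne _
  obtain ⟨x, hx⟩ := hne
  have := hT hx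
  simp at this
  subst this
  simpa using hx

theorem Conn.union {P K : Set V} (hP : Conn G P) (hK : Conn G K) {p k : V}
    (hp : p ∈ P) (hk : k ∈ K) (hpk : G.Adj p k) : Conn G (P ∪ K) := by
  intro T hT hne hcl
  have h1 : (T ∩ P).Nonempty → P ⊆ T := fun h =>
    (hP (T ∩ P) Set.inter_subset_right h
      (fun x hx y hy hxy => ⟨hcl x hx.1 y (Or.inl hy) hxy, hy⟩)).trans Set.inter_subset_left
  have h2 : (T ∩ K).Nonempty → K ⊆ T := fun h =>
    (hK (T ∩ K) Set.inter_subset_right h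
      (fun x hx y hy hxy => ⟨hcl x hx.1 y (Or.inr hy) hxy, hy⟩)).trans Set.inter_subset_left
  obtain ⟨x, hx⟩ := hne
  rcases hT hx with hxP | hxK
  · have a := h1 ⟨x, hx, hxP⟩
    have b := h2 ⟨k, hcl p (a hp) k (Or.inr hk) hpk, hk⟩
    exact Set.union_subset a b
  · have a := h2 ⟨x, hx, hxK⟩
    have b := h1 ⟨p, hcl k (a hk) p (Or.inl hp) hpk.symm, hp⟩
    exact Set.union_subset b a

theorem RTree.mem {P : Set V} {p : V} (h : RTree G P p) : p ∈ P := by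
  induction h with
  | single p => simp
  | join P p K k _ _ _ _ h1 h2 => exact Or.inl h1

theorem RTree.finite {P : Set V} {p : V} (h : RTree G P p) : P.Finite := by
  induction h with
  | single p => simp
  | join P p K k _ _ _ _ h1 h2 => exact h1.union h2

theorem RTree.conn {P : Set V} {p : V} (h : RTree G P p) : Conn G P := by
  induction h with
  | single p => exact conn_single p
  | join P p K k a b _ hpk h1 h2 => exact h1.union h2 a.mem b.mem hpk

theorem Cat.mem_left {P : Set V} {p s : V} (h : Cat G P p s) : p ∈ P := by
  cases h with
  | base P p h => exact h.mem
  | join P p K k s h _ _ _ => exact Or.inl h.mem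

theorem Cat.mem_right {P : Set V} {p s : V} (h : Cat G P p s) : s ∈ P := by
  induction h with
  | base P p h => exact h.mem
  | join P p K k s h _ _ _ ih => exact Or.inr ih

theorem Cat.finite {P : Set V} {p s : V} (h : Cat G P p s) : P.Finite := by
  induction h with
  | base P p h => exact h.finite
  | join P p K k s h _ _ _ ih => exact h.finite.union ih

theorem Cat.conn {P : Set V} {p s : V} (h : Cat G P p s) : Conn G P := by
  induction h with
  | base P p h => exact h.conn
  | join P p K k s h hc _ hpk ih => exact h.conn.union ih h.mem hc.mem_left hpk

theorem RTree.leaf {P : Set V} {p : V} (h : RTree G P p) {x y : V} (hx : x ∈ P) (hy : y ∉ P)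
    (hxy : G.Adj x y) : RTree G (insert y P) p := by
  induction h with
  | single p =>
    simp at hx
    subst hx
    rw [show (insert y {x} : Set V) = {x} ∪ {y} by ext; simp]
    refine .join _ _ _ _ (.single _) (.single y) ?_ hxy
    simpa using fun h => hy (by simp [h])
  | join P p K k a b hd hpk h1 h2 =>
    simp only [Set.mem_union, not_or] at hy
    by_cases hxP : x ∈ P
    · rw [← Set.insert_union]
      exact .join _ _ _ _ (h1 hxP hy.1) b (by simp [hd, hy.2]) hpk
    · rw [← Set.union_insert]
      exact .join _ _ _ _ a (h2 (hx.resolve_left hxP) hy.2) (by simp [hd, hy.1]) hpk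

theorem Cat.leaf {P : Set V} {p s : V} (h : Cat G P p s) {x y : V} (hx : x ∈ P) (hy : y ∉ P)
    (hxy : G.Adj x y) : Cat G (insert y P) p s := by
  induction h with
  | base P p h => exact .base _ _ (h.leaf hx hy hxy)
  | join P p K k s a b hd hpk h2 =>
    simp only [Set.mem_union, not_or] at hy
    by_cases hxP : x ∈ P
    · rw [← Set.insert_union]
      exact .join _ _ _ _ _ (a.leaf hxP hy.1 hxy) b (by simp [hd, hy.2]) hpk
    · rw [← Set.union_insert]
      exact .join _ _ _ _ _ a (h2 (hx.resolve_left hxP) hy.2) (by simp [hd, hy.1]) hpk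

theorem RTree.sub {P : Set V} {p : V} (h : RTree G P p) {y : V} (hy : y ∈ P) :
    ∃ T ⊆ P, Cat G T p y := by
  induction h with
  | single p =>
    simp at hy
    subst hy
    exact ⟨_, subset_rfl, .base _ _ (.single _)⟩
  | join P p K k a b hd hpk h1 h2 =>
    rcases hy with hy | hy
    · obtain ⟨T, hT, hc⟩ := h1 hy
      exact ⟨T, hT.trans Set.subset_union_left, hc⟩
    · obtain ⟨T, hT, hc⟩ := h2 hy
      exact ⟨P ∪ T, Set.union_subset_union_right _ hT, .join _ _ _ _ _ a hc (hd.mono_right hT) hpk⟩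

theorem Cat.sub {P : Set V} {p s : V} (h : Cat G P p s) {y : V} (hy : y ∈ P) :
    ∃ T ⊆ P, Cat G T p y := by
  induction h with
  | base P p h => exact h.sub hy
  | join P p K k s a b hd hpk h2 =>
    rcases hy with hy | hy
    · obtain ⟨T, hT, hc⟩ := a.sub hy
      exact ⟨T, hT.trans Set.subset_union_left, hc⟩
    · obtain ⟨T, hT, hc⟩ := h2 hy
      exact ⟨P ∪ T, Set.union_subset_union_right _ hT, .join _ _ _ _ _ a hc (hd.mono_right hT) hpk⟩

theorem exists_cat {W : Set V} (hW : Conn G W) {p s : V} (hp : p ∈ W) (hs : s ∈ W) :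
    ∃ T ⊆ W, Cat G T p s := by
  have := hW {s | s ∈ W ∧ ∃ T ⊆ W, Cat G T p s} (fun x hx => hx.1)
    ⟨p, hp, {p}, by simpa using hp, .base _ _ (.single p)⟩ ?_
  · exact (this hs).2
  · rintro x ⟨hx, T, hT, hc⟩ y hy hxy
    refine ⟨hy, ?_⟩
    by_cases hyT : y ∈ T
    · obtain ⟨T', h, h'⟩ := hc.sub hyT
      exact ⟨T', h.trans hT, h'⟩
    · obtain ⟨T', h, h'⟩ := (hc.leaf hc.mem_right hyT hxy).sub (Set.mem_insert y T)
      exact ⟨T', h.trans (Set.insert_subset hy hT), h'⟩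

theorem full_cat {S : Set V} (hS : Conn G S) (hf : S.Finite) {p s : V} (hp : p ∈ S) (hs : s ∈ S) :
    Cat G S p s := by
  have hfin : {T | T ⊆ S ∧ Cat G T p s}.Finite := hf.finite_subsets.subset fun T hT => hT.1
  obtain ⟨T0, h0, h0'⟩ := exists_cat hS hp hs
  obtain ⟨T, hT⟩ := hfin.exists_maximal ⟨T0, h0, h0'⟩
  have hsub : S ⊆ T := by
    refine hS T hT.prop.1 ⟨p, hT.prop.2.mem_left⟩ ?_
    intro x hx y hy hxy
    by_contra hyT
    exact hyT (hT.le_of_ge ⟨Set.insert_subset hy hT.prop.1, hT.prop.2.leaf hx hyT hxy⟩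
      (Set.subset_insert y T) (Set.mem_insert y T))
  rw [hsub.antisymm hT.prop.1]
  exact hT.prop.2

theorem inf_comp {W Z : Set V} (hW : Conn G W) (hZW : Z ⊆ W) (hZ : Z.Infinite)
    (hne : (W \ Z).Nonempty) (hfin : {x | x ∈ Z ∧ ∃ y ∈ W \ Z, G.Adj x y}.Finite) :
    ∃ X ⊆ Z, X.Infinite ∧ Conn G X ∧ ∀ x ∈ X, ∀ y ∈ Z, G.Adj x y → y ∈ X := by
  let r : V → V → Prop := fun a b => a ∈ Z ∧ b ∈ Z ∧ G.Adj a b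
  have hsym : ∀ a b, Relation.ReflTransGen r a b → Relation.ReflTransGen r b a := by
    intro a b h
    induction h with
    | refl => exact .refl
    | tail _ h ih => exact .head ⟨h.2.1, h.1, h.2.2.symm⟩ ih
  let comp : V → Set V := fun x => {y | Relation.ReflTransGen r x y}
  have hcompZ : ∀ x ∈ Z, comp x ⊆ Z := by
    intro x hx y hy
    induction hy with
    | refl => exact hx
    | tail _ h _ => exact h.2.1
  set B := {x | x ∈ Z ∧ ∃ y ∈ W \ Z, G.Adj x y} with hB
  have hcover : W ⊆ (W \ Z) ∪ ⋃ x ∈ B, comp x := by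
    refine hW _ ?_ (hne.mono Set.subset_union_left) ?_
    · refine Set.union_subset Set.sdiff_subset (Set.iUnion₂_subset fun x hx => ?_)
      exact (hcompZ x hx.1).trans hZW
    · intro a ha b hb hab
      by_cases hbZ : b ∈ Z
      · right
        simp only [Set.mem_iUnion]
        rcases ha with ha | ha
        · exact ⟨b, ⟨hbZ, a, ha, hab.symm⟩, .refl⟩
        · simp only [Set.mem_iUnion] at ha
          obtain ⟨x, hx, hxa⟩ := ha
          exact ⟨x, hx, .tail hxa ⟨hcompZ x hx.1 hxa, hbZ, hab⟩⟩
      · exact Or.inl ⟨hb, hbZ⟩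
  have hex : ∃ x ∈ B, (comp x).Infinite := by
    by_contra hcon
    push Not at hcon
    refine hZ ((hfin.biUnion hcon).subset fun z hz => ?_)
    rcases hcover (hZW hz) with h | h
    · exact absurd hz h.2
    · exact h
  obtain ⟨x, hx, hinf⟩ := hex
  refine ⟨comp x, hcompZ x hx.1, hinf, ?_, ?_⟩
  · intro T hT ⟨y, hy⟩ hcl z hz
    have : Relation.ReflTransGen r y z := (hsym _ _ (hT hy)).trans hz
    clear hz
    induction this with
    | refl => exact hy
    | tail _ h ih => exact hcl _ ih _ (.tail (hT ih) h) h.2.2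
  · intro a ha b hb hab
    exact .tail ha ⟨hcompZ x hx.1 ha, hb, hab⟩

def OneEnded (G : SimpleGraph V) (C : Set V) : Prop :=
  ∀ X ⊆ C, {x | x ∈ X ∧ ∃ y ∈ C \ X, G.Adj x y}.Finite → X.Finite ∨ (C \ X).Finite

theorem nbrs_finite (hlf : ∀ v, (G.neighborSet v).Finite) {F : Set V} (hF : F.Finite) :
    {x | ∃ y ∈ F, G.Adj x y}.Finite := by
  refine (hF.biUnion fun y _ => hlf y).subset ?_
  rintro x ⟨y, hy, h⟩
  simp only [Set.mem_iUnion]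
  exact ⟨y, hy, h.symm⟩

theorem step_set (hlf : ∀ v, (G.neighborSet v).Finite) {C : Set V} (hC : OneEnded G C)
    {W : Set V} (hWC : W ⊆ C) (hWi : W.Infinite) (hCW : (C \ W).Finite) (hW : Conn G W)
    {p v : V} (hp : p ∈ W) (hv : v ∈ W) :
    ∃ S ⊆ W, S.Finite ∧ p ∈ S ∧ v ∈ S ∧ Conn G S ∧ Conn G (W \ S) ∧
      ∃ s ∈ S, ∃ q ∈ W \ S, G.Adj s q := by
  obtain ⟨S0, hS0, hcat⟩ := exists_cat hW hp hv
  have hZi : (W \ S0).Infinite := hWi.sdiff hcat.finite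
  obtain ⟨X, hXZ, hXi, hXc, hXcl⟩ := inf_comp hW (Z := W \ S0) Set.sdiff_subset hZi
    ⟨p, hp, fun h => h.2 hcat.mem_left⟩
    ((nbrs_finite hlf hcat.finite).subset (by
      rintro x ⟨hx, y, hy, h⟩
      refine ⟨y, ?_, h⟩
      by_contra hyS
      exact hy.2 ⟨hy.1, hyS⟩))
  have hXW : X ⊆ W := hXZ.trans Set.sdiff_subset
  have hfin : (C \ X).Finite := by
    refine (hC X (hXW.trans hWC) ?_).resolve_left hXi
    refine (nbrs_finite hlf (hcat.finite.union hCW)).subset ?_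
    rintro x ⟨hx, y, hy, h⟩
    refine ⟨y, ?_, h⟩
    by_contra hcon
    simp only [Set.mem_union, Set.mem_sdiff, not_or, not_and, not_not] at hcon
    exact hy.2 (hXcl x hx y ⟨hcon.2 hy.1, hcon.1⟩ h)
  have hS0S : S0 ⊆ W \ X := fun z hz => ⟨hS0 hz, fun h => (hXZ h).2 hz⟩
  have hWS : W \ (W \ X) = X := by simp [hXW]
  refine ⟨W \ X, Set.sdiff_subset, hfin.subset (Set.sdiff_subset_sdiff_left hWC),
    hS0S hcat.mem_left, hS0S hcat.mem_right, ?_, by rwa [hWS], ?_⟩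
  ·
    have key : ∀ T ⊆ W \ X, T.Nonempty → (∀ x ∈ T, ∀ y ∈ W \ X, G.Adj x y → y ∈ T) →
        ∃ z ∈ S0, z ∈ T := by
      intro T hT hne hcl
      by_contra hcon
      push Not at hcon
      refine hcon p hcat.mem_left (hW T (hT.trans Set.sdiff_subset) hne ?_ hp)
      intro x hx y hy hxy
      refine hcl x hx y ⟨hy, fun hyX => ?_⟩ hxy
      exact (hT hx).2 (hXcl y hyX x ⟨(hT hx).1, fun h => hcon x h hx⟩ hxy.symm)
    intro T hT hne hcl
    by_contra hcon
    obtain ⟨z, hz, hzT⟩ := key T hT hne hcl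
    have h1 : S0 ⊆ T := (hcat.conn (T ∩ S0) Set.inter_subset_right ⟨z, hzT, hz⟩
      (fun x hx y hy hxy => ⟨hcl x hx.1 y (hS0S hy) hxy, hy⟩)).trans Set.inter_subset_left
    obtain ⟨w, hw, hwT⟩ := key ((W \ X) \ T) Set.sdiff_subset (by
        rw [Set.not_subset] at hcon
        obtain ⟨a, ha, hb⟩ := hcon
        exact ⟨a, ha, hb⟩)
      (fun x hx y hy hxy => ⟨hy, fun hyT => hx.2 (hcl y hyT x hx.1 hxy.symm)⟩)
    exact hwT.2 (h1 hw)
  · by_contra hcon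
    push Not at hcon
    have := hW (W \ X) Set.sdiff_subset ⟨p, hS0S hcat.mem_left⟩ (fun x hx y hy hxy => by
      by_contra hyn
      exact hcon x hx y ⟨hy, hyn⟩ hxy)
    obtain ⟨x, hx⟩ := hXi.nonempty
    exact (this (hXW hx)).2 hx


def Ham (G : SimpleGraph V) (l : List V) (P : Set V) (a b : V) : Prop :=
  l.Nodup ∧ (∀ x, x ∈ l ↔ x ∈ P) ∧ l.IsChain (fun x y => G.dist x y ≤ 3) ∧ l.head? = some a ∧
    ∃ q, l.getLast? = some q ∧ G.dist q b ≤ 1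

theorem RTree.ham (hG : G.Connected) {P : Set V} {p : V} (h : RTree G P p) :
    ∃ l, Ham G l P p p := by
  induction h with
  | single p => exact ⟨[p], by simp [Ham]⟩
  | join P p K k a b hd hpk h1 h2 =>
    obtain ⟨l1, n1, m1, c1, e1, q1, f1, d1⟩ := h1
    obtain ⟨l2, n2, m2, c2, e2, q2, f2, d2⟩ := h2
    have hk : G.dist p k = 1 := SimpleGraph.dist_eq_one_iff_adj.2 hpk
    refine ⟨l1 ++ l2.reverse, ?_, ?_, ?_, ?_, k, ?_, ?_⟩
    · rw [List.nodup_append']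
      refine ⟨n1, List.nodup_reverse.2 n2, ?_⟩
      intro x hx hx'
      rw [List.mem_reverse] at hx'
      exact Set.disjoint_left.1 hd ((m1 x).1 hx) ((m2 x).1 hx')
    · intro x
      simp [m1, m2]
    · rw [List.isChain_append]
      refine ⟨c1, ?_, ?_⟩
      · rw [List.isChain_reverse]
        simpa only [G.dist_comm] using c2
      · intro x hx y hy
        rw [f1] at hx
        rw [List.head?_reverse, f2] at hy
        simp at hx hy
        subst hx hy
        have t1 := hG.dist_triangle (u := q1) (v := p) (w := q2)
        have t2 := hG.dist_triangle (u := p) (v := k) (w := q2)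
        rw [G.dist_comm (u := k)] at t2
        omega
    · simp [e1]
    · simp [e2]
    · rw [G.dist_comm]; omega

theorem Cat.ham (hG : G.Connected) {P : Set V} {p s : V} (h : Cat G P p s) :
    ∃ l, Ham G l P p s := by
  induction h with
  | base P p h => exact h.ham hG
  | join P p K k s a b hd hpk h2 =>
    obtain ⟨l1, n1, m1, c1, e1, q1, f1, d1⟩ := a.ham hG
    obtain ⟨l2, n2, m2, c2, e2, q2, f2, d2⟩ := h2
    have hk : G.dist p k = 1 := SimpleGraph.dist_eq_one_iff_adj.2 hpk
    refine ⟨l1 ++ l2, ?_, ?_, ?_, ?_, q2, ?_, d2⟩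
    · rw [List.nodup_append']
      refine ⟨n1, n2, ?_⟩
      intro x hx hx'
      exact Set.disjoint_left.1 hd ((m1 x).1 hx) ((m2 x).1 hx')
    · intro x
      simp [m1, m2]
    · rw [List.isChain_append]
      refine ⟨c1, c2, ?_⟩
      intro x hx y hy
      rw [f1] at hx
      rw [e2] at hy
      simp at hx hy
      subst hx hy
      have t1 := hG.dist_triangle (u := q1) (v := p) (w := k)
      omega
    · simp [e1]
    · simp [f2]

def Valid (G : SimpleGraph V) (C : Set V) (s : List V × V) : Prop :=
  s.1.Nodup ∧ (∀ x ∈ s.1, x ∈ C) ∧ s.2 ∈ C ∧ s.2 ∉ s.1 ∧ Conn G (C \ {x | x ∈ s.1}) ∧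
    (s.1 ++ [s.2]).IsChain (fun x y => G.dist x y ≤ 3)

theorem step_list (hG : G.Connected) (hlf : ∀ v, (G.neighborSet v).Finite) {C : Set V}
    (hC : OneEnded G C) (hCi : C.Infinite) (s : List V × V) (hs : Valid G C s) (v : V) :
    ∃ t, Valid G C t ∧ s.1 <+: t.1 ∧ s.1.length < t.1.length ∧ (v ∈ C → v ∈ t.1) := by
  obtain ⟨L, p⟩ := s
  obtain ⟨hn, hLC, hpC, hpL, hconn, hch⟩ := hs
  simp only at hn hLC hpC hpL hconn hch ⊢
  have hLf : {x | x ∈ L}.Finite := L.finite_toSet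
  set W := C \ {x | x ∈ L} with hWdef
  have hpW : p ∈ W := ⟨hpC, hpL⟩
  obtain ⟨v', hv', hvv⟩ : ∃ v' ∈ W, v ∈ C → v ∈ L ∨ v = v' := by
    by_cases h : v ∈ W
    · exact ⟨v, h, fun _ => Or.inr rfl⟩
    · refine ⟨p, hpW, fun hv => Or.inl ?_⟩
      by_contra hvL
      exact h ⟨hv, hvL⟩
  obtain ⟨S, hSW, hSf, hpS, hvS, hSc, hWSc, s, hs, q, hq, hsq⟩ :=
    step_set hlf hC (W := W) Set.sdiff_subset (hCi.sdiff hLf)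
      (hLf.subset (fun x hx => by
        by_contra h
        exact hx.2 ⟨hx.1, h⟩)) hconn hpW hv'
  obtain ⟨l, n1, m1, c1, e1, q1, f1, d1⟩ := (full_cat hSc hSf hpS hs).ham hG
  obtain ⟨l', rfl⟩ : ∃ l', l = p :: l' := by
    cases l with
    | nil => simp at e1
    | cons a l' => simp at e1; exact ⟨l', by rw [e1]⟩
  refine ⟨(L ++ p :: l', q), ⟨?_, ?_, ?_, ?_, ?_, ?_⟩, ?_, ?_, ?_⟩
  · simp only
    rw [List.nodup_append']
    exact ⟨hn, n1, fun x hx hx' => (hSW ((m1 x).1 hx')).2 hx⟩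
  · intro x hx
    rcases List.mem_append.1 hx with h | h
    · exact hLC x h
    · exact (hSW ((m1 x).1 h)).1
  · exact hq.1.1
  · intro h
    rcases List.mem_append.1 h with h | h
    · exact hq.1.2 h
    · exact hq.2 ((m1 q).1 h)
  · have : C \ {x | x ∈ L ++ p :: l'} = W \ S := by
      ext x
      simp only [hWdef, Set.mem_sdiff, Set.mem_ofPred_eq, List.mem_append, m1]
      tauto
    simp only
    rw [this]
    exact hWSc
  · simp only
    rw [List.append_assoc, List.cons_append, List.isChain_split]
    refine ⟨hch, ?_⟩
    rw [← List.cons_append, List.isChain_append]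
    refine ⟨c1, by simp, ?_⟩
    intro x hx y hy
    rw [f1] at hx
    simp at hx hy
    subst hx hy
    have t1 := hG.dist_triangle (u := q1) (v := s) (w := q)
    have hk : G.dist s q = 1 := SimpleGraph.dist_eq_one_iff_adj.2 hsq
    omega
  · exact List.prefix_append _ _
  · simp
  · intro hv
    rcases hvv hv with h | h
    · exact List.mem_append_left _ h
    · subst h
      exact List.mem_append_right _ ((m1 _).2 hvS)

def HasRay (G : SimpleGraph V) (C : Set V) : Prop :=
  ∃ f : ℕ → V, Function.Injective f ∧ Set.range f = C ∧ ∃ K : ℕ, ∀ n, G.dist (f n) (f (n + 1)) ≤ K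

theorem exists_ray [Countable V] (hG : G.Connected) (hlf : ∀ v, (G.neighborSet v).Finite)
    {C : Set V} (hC : OneEnded G C) (hCi : C.Infinite) (hCc : Conn G C) : HasRay G C := by
  obtain ⟨p, hp⟩ := hCi.nonempty
  have : Nonempty V := ⟨p⟩
  obtain ⟨e, he⟩ := exists_surjective_nat V
  choose! g hg1 hg2 hg3 hg4 using step_list hG hlf hC hCi
  let st : ℕ → List V × V := fun n => Nat.rec ([], p) (fun n s => g s (e n)) n
  have hst : ∀ n, st (n + 1) = g (st n) (e n) := fun n => rfl
  have hval : ∀ n, Valid G C (st n) := by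
    intro n
    induction n with
    | zero => exact ⟨by simp [st], by simp [st], hp, by simp [st], by simpa [st] using hCc, by simp [st]⟩
    | succ n ih => rw [hst]; exact hg1 _ ih _
  let L : ℕ → List V := fun n => (st n).1
  have hpre : ∀ n, L n <+: L (n + 1) := fun n => hg2 _ (hval n) (e n)
  have hlt : ∀ n, (L n).length < (L (n + 1)).length := fun n => hg3 _ (hval n) (e n)
  have hmem : ∀ n, e n ∈ C → e n ∈ L (n + 1) := fun n => hg4 _ (hval n) (e n)
  have hpre' : ∀ m n, m ≤ n → L m <+: L n := by
    intro m n h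
    induction h with
    | refl => exact List.prefix_rfl
    | step _ ih => exact ih.trans (hpre _)
  have hlen : ∀ n, n ≤ (L n).length := by
    intro n
    induction n with
    | zero => simp
    | succ n ih => have := hlt n; omega
  have hlen' : ∀ n, n < (L (n + 1)).length := fun n => hlen (n + 1)
  let f : ℕ → V := fun n => (L (n + 1))[n]'(hlen' n)
  have hf : ∀ m n, ∀ h : n < (L m).length, (L m)[n] = f n := by
    intro m n h
    rcases le_total m (n + 1) with h' | h'
    · exact (hpre' _ _ h').getElem h
    · exact ((hpre' _ _ h').getElem (hlen' n)).symm
  refine ⟨f, ?_, ?_, 3, ?_⟩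
  · intro a b hab
    have h1 : a < (L (max a b + 1)).length := by have := hlen' (max a b); omega
    have h2 : b < (L (max a b + 1)).length := by have := hlen' (max a b); omega
    rw [← hf (max a b + 1) a h1, ← hf (max a b + 1) b h2] at hab
    exact ((hval (max a b + 1)).1.getElem_inj_iff).1 hab
  · ext v
    constructor
    · rintro ⟨n, rfl⟩
      exact (hval (n + 1)).2.1 _ (List.getElem_mem _)
    · intro hv
      obtain ⟨n, rfl⟩ := he v
      obtain ⟨i, hi, h⟩ := List.getElem_of_mem (hmem n hv)
      exact ⟨i, by rw [← hf (n + 1) i hi, h]⟩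
  · intro n
    have h2 : n + 1 < (L (n + 2)).length := hlen' (n + 1)
    rw [← hf (n + 2) n (by omega), ← hf (n + 2) (n + 1) h2]
    have := (List.isChain_append.1 (hval (n + 2)).2.2.2.2.2).1
    exact List.isChain_iff_getElem.1 this n h2

theorem HasRay.insert {C : Set V} (h : HasRay G C) {x : V} (hx : x ∉ C) :
    HasRay G (insert x C) := by
  obtain ⟨f, hinj, rfl, K, hK⟩ := h
  refine ⟨fun n => Nat.casesOn n x f, ?_, ?_, max K (G.dist x (f 0)), ?_⟩
  · intro a b hab
    cases a <;> cases b <;> simp at hab ⊢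
    · exact hx ⟨_, hab.symm⟩
    · exact hx ⟨_, hab⟩
    · exact hinj hab
  · ext y
    constructor
    · rintro ⟨n, rfl⟩
      cases n <;> simp
    · rintro (rfl | ⟨n, rfl⟩)
      · exact ⟨0, rfl⟩
      · exact ⟨n + 1, rfl⟩
  · intro n
    cases n with
    | zero => exact le_max_right _ _
    | succ n => exact (hK n).trans (le_max_left _ _)

theorem HasRay.union {C F : Set V} (h : HasRay G C) (hF : F.Finite) (hd : Disjoint C F) :
    HasRay G (C ∪ F) := by
  induction F, hF using Set.Finite.induction_on with
  | empty => simpa using h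
  | @insert a S ha hS ih =>
    rw [Set.disjoint_insert_right] at hd
    rw [Set.union_insert]
    exact (ih hd.2).insert (by simp [hd.1, ha])

theorem HasRay.split (hG : G.Connected) {C : Set V} (h : HasRay G C) :
    ∃ C1 C2, HasRay G C1 ∧ HasRay G C2 ∧ Disjoint C1 C2 ∧ C1 ∪ C2 = C := by
  obtain ⟨f, hinj, rfl, K, hK⟩ := h
  have h2 : ∀ n, G.dist (f n) (f (n + 2)) ≤ 2 * K := by
    intro n
    have := hG.dist_triangle (u := f n) (v := f (n + 1)) (w := f (n + 2))
    have := hK n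
    have := hK (n + 1)
    rw [show n + 1 + 1 = n + 2 from rfl] at this
    omega
  refine ⟨_, _, ⟨fun n => f (2 * n), ?_, rfl, 2 * K, fun n => h2 (2 * n)⟩,
    ⟨fun n => f (2 * n + 1), ?_, rfl, 2 * K, fun n => h2 (2 * n + 1)⟩, ?_, ?_⟩
  · intro a b h; have := hinj h; omega
  · intro a b h; have := hinj h; omega
  · rw [Set.disjoint_left]
    rintro _ ⟨a, rfl⟩ ⟨b, h⟩
    have := hinj h
    omega
  · ext y
    constructor
    · rintro (⟨n, rfl⟩ | ⟨n, rfl⟩) <;> exact ⟨_, rfl⟩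
    · rintro ⟨n, rfl⟩
      rcases Nat.even_or_odd' n with ⟨c, rfl | rfl⟩
      · exact Or.inl ⟨c, rfl⟩
      · exact Or.inr ⟨c, rfl⟩

theorem line_of_rays {C1 C2 : Set V} (h1 : HasRay G C1) (h2 : HasRay G C2)
    (hd : Disjoint C1 C2) (hu : C1 ∪ C2 = Set.univ) :
    ∃ φ : ℤ → V, Function.Bijective φ ∧ ∃ K : ℕ, ∀ n, G.dist (φ n) (φ (n + 1)) ≤ K := by
  obtain ⟨f, hf, rfl, K, hK⟩ := h1
  obtain ⟨g, hg, rfl, M, hM⟩ := h2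
  rw [Set.disjoint_left] at hd
  let φ : ℤ → V := fun n => match n with
    | Int.ofNat n => f n
    | Int.negSucc n => g n
  have p1 : ∀ n : ℕ, φ (Int.ofNat n) = f n := fun _ => rfl
  have p2 : ∀ n : ℕ, φ (Int.negSucc n) = g n := fun _ => rfl
  refine ⟨φ, ⟨?_, ?_⟩, max (max K M) (G.dist (g 0) (f 0)), ?_⟩
  · intro a b hab
    rcases a with a | a <;> rcases b with b | b
    · rw [p1, p1] at hab; rw [hf hab]
    · rw [p1, p2] at hab; exact absurd ⟨b, hab.symm⟩ (hd ⟨a, rfl⟩)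
    · rw [p1, p2] at hab; exact absurd ⟨a, hab⟩ (hd ⟨b, rfl⟩)
    · rw [p2, p2] at hab; rw [hg hab]
  · intro y
    have : y ∈ Set.range f ∪ Set.range g := hu ▸ Set.mem_univ y
    rcases this with ⟨n, rfl⟩ | ⟨n, rfl⟩
    · exact ⟨Int.ofNat n, p1 n⟩
    · exact ⟨Int.negSucc n, p2 n⟩
  · intro n
    rcases n with n | n
    · rw [show (Int.ofNat n + 1) = Int.ofNat (n + 1) from rfl, p1, p1]
      exact (hK n).trans ((le_max_left _ _).trans (le_max_left _ _))
    · rcases n with _ | n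
      · rw [show (Int.negSucc 0 + 1) = Int.ofNat 0 from rfl, p1, p2]
        exact le_max_right _ _
      · rw [show (Int.negSucc (n + 1) + 1) = Int.negSucc n from rfl, p2, p2, G.dist_comm]
        exact (hM n).trans ((le_max_right _ _).trans (le_max_left _ _))

theorem conn_univ (hG : G.Connected) : Conn G Set.univ := by
  intro T _ ⟨x, hx⟩ hcl y _
  obtain ⟨w⟩ := hG.preconnected x y
  induction w with
  | nil => exact hx
  | cons h _ ih => exact ih (hcl _ hx _ trivial h) trivial

theorem walk_finite (hlf : ∀ v, (G.neighborSet v).Finite) (n : ℕ) :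
    ∀ x, {y | ∃ w : G.Walk x y, w.length = n}.Finite := by
  induction n with
  | zero =>
    intro x
    refine (Set.finite_singleton x).subset ?_
    rintro y ⟨w, hw⟩
    exact (SimpleGraph.Walk.eq_of_length_eq_zero hw).symm
  | succ n ih =>
    intro x
    refine ((hlf x).biUnion fun z _ => ih z).subset ?_
    rintro y ⟨w, hw⟩
    cases w with
    | nil => simp at hw
    | @cons _ z _ h w' =>
      simp only [Set.mem_iUnion]
      exact ⟨z, h, w', by simpa using hw⟩

theorem ball_finite (hG : G.Connected) (hlf : ∀ v, (G.neighborSet v).Finite) (n : ℕ) (x : V) :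
    {y | G.dist x y ≤ n}.Finite := by
  refine ((Set.finite_Iic n).biUnion fun k _ => walk_finite hlf k x).subset ?_
  intro y hy
  obtain ⟨w, hw⟩ := hG.exists_walk_length_eq_dist x y
  simp only [Set.mem_iUnion]
  exact ⟨G.dist x y, hy, w, hw⟩

theorem countable_of (hG : G.Connected) (hlf : ∀ v, (G.neighborSet v).Finite) : Countable V := by
  obtain ⟨x⟩ := hG.nonempty
  rw [← Set.countable_univ_iff]
  refine (Set.countable_iUnion fun n => (ball_finite hG hlf n x).countable).mono ?_
  intro y _
  exact Set.mem_iUnion.2 ⟨G.dist x y, le_refl (G.dist x y)⟩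

/-- The vertices of `X` having a neighbour outside `X`. -/
def bdry (G : SimpleGraph V) (X : Set V) : Set V := {x | x ∈ X ∧ ∃ y, y ∉ X ∧ G.Adj x y}

theorem bdry_compl (hlf : ∀ v, (G.neighborSet v).Finite) {X : Set V} (h : (bdry G X).Finite) :
    (bdry G Xᶜ).Finite := by
  refine (nbrs_finite hlf h).subset ?_
  rintro x ⟨hx, y, hy, hxy⟩
  exact ⟨y, ⟨not_not.1 hy, x, hx, hxy.symm⟩, hxy⟩

theorem bdry_inter {X Y : Set V} (h : (bdry G X).Finite)
    (h' : (bdry G Y).Finite) : (bdry G (X ∩ Y)).Finite := by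
  refine (h.union h').subset ?_
  rintro x ⟨hx, y, hy, hxy⟩
  by_cases hyX : y ∈ X
  · exact Or.inr ⟨hx.2, y, fun h => hy ⟨hyX, h⟩, hxy⟩
  · exact Or.inl ⟨hx.1, y, hyX, hxy⟩

theorem inf_comp_univ (hG : G.Connected) {X : Set V} (hX : X.Infinite) (hX' : X ≠ Set.univ)
    (hb : (bdry G X).Finite) : ∃ Y ⊆ X, Y.Infinite ∧ Conn G Y ∧ (bdry G Y).Finite := by
  obtain ⟨Y, hY, hYi, hYc, hYcl⟩ := inf_comp (conn_univ hG) (Set.subset_univ X) hX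
    (by
      rw [Set.ne_univ_iff_exists_notMem] at hX'
      obtain ⟨a, ha⟩ := hX'
      exact ⟨a, trivial, ha⟩)
    (hb.subset (by
      rintro x ⟨hx, y, hy, hxy⟩
      exact ⟨hx, y, hy.2, hxy⟩))
  refine ⟨Y, hY, hYi, hYc, hb.subset ?_⟩
  rintro x ⟨hx, y, hy, hxy⟩
  exact ⟨hY hx, y, fun h => hy (hYcl x hx y h hxy), hxy⟩

theorem edges_finite (hlf : ∀ v, (G.neighborSet v).Finite) {X : Set V} (h : (bdry G X).Finite) :
    {e : Sym2 V | ∃ x ∈ X, ∃ y, y ∉ X ∧ G.Adj x y ∧ e = s(x, y)}.Finite := by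
  refine (h.biUnion fun x _ => (hlf x).image (fun y => s(x, y))).subset ?_
  rintro e ⟨x, hx, y, hy, hxy, rfl⟩
  simp only [Set.mem_iUnion]
  exact ⟨x, ⟨hx, y, hy, hxy⟩, y, hxy, rfl⟩

theorem no_three (hG : G.Connected) (hlf : ∀ v, (G.neighborSet v).Finite)
    (hE : ∀ A : Finset (Sym2 V),
      {c : (G.deleteEdges (A : Set (Sym2 V))).ConnectedComponent | c.supp.Infinite}.encard ≤ 2)
    {X : Fin 3 → Set V} (hd : ∀ i j, i ≠ j → Disjoint (X i) (X j)) (hi : ∀ i, (X i).Infinite)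
    (hb : ∀ i, (bdry G (X i)).Finite) : False := by
  have hne : ∀ i, X i ≠ Set.univ := by
    intro i h
    obtain ⟨j, hj⟩ : ∃ j : Fin 3, i ≠ j := ⟨i + 1, by clear h; revert i; decide⟩
    have := hd i j hj
    rw [h, Set.univ_disjoint] at this
    exact (hi j).nonempty.ne_empty this
  choose Y hYX hYi hYc hYb using fun i => inf_comp_univ hG (hi i) (hne i) (hb i)
  have hYd : ∀ i j, i ≠ j → ∀ x ∈ Y i, x ∉ Y j := fun i j hij x hx hx' =>
    Set.disjoint_left.1 (hd i j hij) (hYX i hx) (hYX j hx')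
  have hAf := Set.finite_iUnion fun i => edges_finite hlf (hYb i)
  let A : Finset (Sym2 V) := hAf.toFinset
  have hA : ∀ e, e ∈ (A : Set (Sym2 V)) ↔
      ∃ i, ∃ x ∈ Y i, ∃ y, y ∉ Y i ∧ G.Adj x y ∧ e = s(x, y) := by
    intro e
    simp [A]
  set H := G.deleteEdges (A : Set (Sym2 V)) with hH
  choose y hy using fun i => (hYi i).nonempty
  have hadj : ∀ i, ∀ a ∈ Y i, ∀ b ∈ Y i, G.Adj a b → H.Adj a b := by
    intro i a ha b hb hab
    rw [hH, SimpleGraph.deleteEdges_adj]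
    refine ⟨hab, ?_⟩
    rw [hA]
    rintro ⟨j, u, hu, v, hv, huv, he⟩
    have hu' : u ∈ Y i ∧ v ∈ Y i := by
      rw [Sym2.eq_iff] at he
      rcases he with ⟨rfl, rfl⟩ | ⟨rfl, rfl⟩
      · exact ⟨ha, hb⟩
      · exact ⟨hb, ha⟩
    by_cases hij : i = j
    · subst hij
      exact hv hu'.2
    · exact hYd i j hij u hu'.1 hu
  have hcl : ∀ i, ∀ a ∈ Y i, ∀ b, H.Reachable a b → b ∈ Y i := by
    rintro i a ha b ⟨w⟩
    induction w with
    | nil => exact ha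
    | @cons u v _ h _ ih =>
      apply ih
      rw [hH, SimpleGraph.deleteEdges_adj, hA] at h
      by_contra hv
      exact h.2 ⟨i, _, ha, _, hv, h.1, rfl⟩
  have hsupp : ∀ i, Y i ⊆ (H.connectedComponentMk (y i)).supp := by
    intro i
    have := hYc i {z | z ∈ Y i ∧ H.Reachable z (y i)} (fun z hz => hz.1) ⟨y i, hy i, .rfl⟩
      (fun a ha b hb hab => ⟨hb, ((hadj i a ha.1 b hb hab).reachable.symm).trans ha.2⟩)
    intro z hz
    rw [SimpleGraph.ConnectedComponent.mem_supp_iff, SimpleGraph.ConnectedComponent.eq]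
    exact (this hz).2
  have hinj : Function.Injective fun i => H.connectedComponentMk (y i) := by
    intro i j hij
    by_contra hne
    rw [SimpleGraph.ConnectedComponent.eq] at hij
    exact hYd i j hne _ (hcl i _ (hy i) _ hij) (hy j)
  have h3 : (Set.range fun i => H.connectedComponentMk (y i)).encard ≤ 2 := by
    refine (Set.encard_le_encard ?_).trans (hE A)
    rintro _ ⟨i, rfl⟩
    exact (hYi i).mono (hsupp i)
  rw [← Set.image_univ, hinj.encard_image, Set.encard_univ] at h3
  simp at h3
  exact absurd h3 (by decide)

theorem backward (hG : G.Connected) (hinf : Infinite V) (hlf : ∀ v, (G.neighborSet v).Finite)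
    (hE : ∀ A : Finset (Sym2 V),
      {c : (G.deleteEdges (A : Set (Sym2 V))).ConnectedComponent | c.supp.Infinite}.encard ≤ 2) :
    ∃ φ : ℤ → V, Function.Bijective φ ∧ ∃ K : ℕ, ∀ n, G.dist (φ n) (φ (n + 1)) ≤ K := by
  have hcount := countable_of hG hlf
  have no3 : ∀ X Y Z : Set V, Disjoint X Y → Disjoint X Z → Disjoint Y Z → X.Infinite →
      Y.Infinite → Z.Infinite → (bdry G X).Finite → (bdry G Y).Finite → (bdry G Z).Finite →
      False := by
    intro X Y Z h1 h2 h3 i1 i2 i3 b1 b2 b3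
    refine no_three hG hlf hE (X := ![X, Y, Z]) ?_ ?_ ?_
    · intro i j hij
      fin_cases i <;> fin_cases j <;> simp at hij ⊢ <;>
        first | assumption | (apply Disjoint.symm; assumption)
    · intro i
      fin_cases i <;> assumption
    · intro i
      fin_cases i <;> assumption
  by_cases h1 : OneEnded G Set.univ
  · obtain ⟨C1, C2, r1, r2, hd, hu⟩ :=
      (exists_ray hG hlf h1 Set.infinite_univ (conn_univ hG)).split hG
    exact line_of_rays r1 r2 hd hu
  · unfold OneEnded at h1
    push Not at h1
    obtain ⟨X, -, hXb, hXi, hXi'⟩ := h1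
    rw [← Set.compl_eq_univ_sdiff] at hXi'
    have hb : (bdry G X).Finite := hXb.subset (by
      rintro x ⟨hx, y, hy, hxy⟩
      exact ⟨hx, y, ⟨trivial, hy⟩, hxy⟩)
    have hb' := bdry_compl hlf hb
    obtain ⟨C1, hC1, i1, c1, b1⟩ := inf_comp_univ hG hXi
      (by rintro rfl; simp at hXi') hb
    obtain ⟨C2, hC2, i2, c2, b2⟩ := inf_comp_univ hG hXi'
      (by
        intro h
        rw [Set.compl_univ_iff] at h
        subst h
        simp at hXi) hb'
    have hd : Disjoint C1 C2 := Set.disjoint_of_subset hC1 hC2 disjoint_compl_right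
    have hR : (C1ᶜ ∩ C2ᶜ).Finite := by
      by_contra hR
      exact no3 C1 C2 (C1ᶜ ∩ C2ᶜ) hd
        (Set.disjoint_left.2 fun x hx hx' => hx'.1 hx)
        (Set.disjoint_left.2 fun x hx hx' => hx'.2 hx) i1 i2 hR b1 b2
        (bdry_inter (bdry_compl hlf b1) (bdry_compl hlf b2))
    have one : ∀ C D : Set V, Disjoint C D → D.Infinite → (bdry G C).Finite →
        (bdry G D).Finite → OneEnded G C := by
      intro C D hCD hD bC bD Y hY hYb
      by_contra hcon
      rw [not_or] at hcon
      have bY : (bdry G Y).Finite := (hYb.union bC).subset (by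
        rintro x ⟨hx, y, hy, hxy⟩
        by_cases hyC : y ∈ C
        · exact Or.inl ⟨hx, y, ⟨hyC, hy⟩, hxy⟩
        · exact Or.inr ⟨hY hx, y, hyC, hxy⟩)
      exact no3 Y (C \ Y) D Set.disjoint_sdiff_right (hCD.mono_left hY)
        (hCD.mono_left Set.sdiff_subset) hcon.1 hcon.2 hD bY
        (bdry_inter bC (bdry_compl hlf bY)) bD
    have r1 := exists_ray hG hlf (one C1 C2 hd i2 b1 b2) i1 c1
    have r2 := exists_ray hG hlf (one C2 C1 hd.symm i1 b2 b1) i2 c2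
    refine line_of_rays (r1.union hR (Set.disjoint_left.2 fun x hx hx' => hx'.1 hx)) r2 ?_ ?_
    · rw [Set.disjoint_union_left]
      exact ⟨hd, Set.disjoint_left.2 fun x hx hx' => hx.2 hx'⟩
    · ext x
      simp only [Set.mem_union, Set.mem_inter_iff, Set.mem_compl_iff, Set.mem_univ, iff_true]
      tauto

open Classical in
theorem forward (hG : G.Connected) (hlf : ∀ v, (G.neighborSet v).Finite)
    (φ : ℤ → V) (hφ : Function.Bijective φ) (K : ℕ) (hK : ∀ n, G.dist (φ n) (φ (n + 1)) ≤ K)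
    (A : Finset (Sym2 V)) :
    {c : (G.deleteEdges (A : Set (Sym2 V))).ConnectedComponent | c.supp.Infinite}.encard ≤ 2 := by
  set H := G.deleteEdges (A : Set (Sym2 V)) with hH
  have hfe : ∀ e : Sym2 V, {u : V | u ∈ e}.Finite := by
    intro e
    induction e using Sym2.ind with
    | _ u v => exact (Set.toFinite {u, v}).subset (fun x hx => by simpa using hx)
  have hends : {u : V | ∃ e ∈ A, u ∈ e}.Finite := by
    refine (A.finite_toSet.biUnion fun e _ => hfe e).subset ?_
    rintro u ⟨e, he, hu⟩
    simp only [Set.mem_iUnion]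
    exact ⟨e, he, hu⟩
  have hbad : {n | ¬ H.Reachable (φ n) (φ (n + 1))}.Finite := by
    have hf := (hends.biUnion fun u _ => ball_finite hG hlf K u).preimage
      (hφ.injective.injOn (s := φ ⁻¹' _))
    refine hf.subset ?_
    intro n hn
    obtain ⟨w, hw⟩ := hG.exists_walk_length_eq_dist (φ n) (φ (n + 1))
    by_cases hwA : ∀ e ∈ w.edges, e ∉ A
    · exact absurd ⟨w.toDeleteEdges (A : Set (Sym2 V)) (by simpa using hwA)⟩ hn
    · push Not at hwA
      obtain ⟨e, he, heA⟩ := hwA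
      induction e using Sym2.ind with
      | _ u v =>
        have hu := w.fst_mem_support_of_mem_edges he
        simp only [Set.mem_preimage, Set.mem_iUnion]
        refine ⟨u, ⟨_, heA, by simp⟩, ?_⟩
        have h1 := SimpleGraph.dist_le (w.takeUntil u hu)
        have h2 := w.length_takeUntil_le_length hu
        have h3 := hK n
        change G.dist u (φ n) ≤ K
        rw [G.dist_comm]
        omega
  obtain ⟨b, hb⟩ := hbad.bddAbove
  obtain ⟨a, ha⟩ := hbad.bddBelow
  have hup : ∀ n, b + 1 ≤ n → H.Reachable (φ (b + 1)) (φ n) := by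
    intro n hn
    induction n, hn using Int.leInduction with
    | base => exact .rfl
    | succ n hn ih =>
      refine ih.trans ?_
      by_contra h
      have := hb h
      omega
  have hdown : ∀ n, n ≤ a → H.Reachable (φ a) (φ n) := by
    intro n hn
    induction n, hn using Int.leInductionDown with
    | base => exact .rfl
    | pred n hn ih =>
      refine ih.trans ?_
      by_contra h
      have h' : ¬ H.Reachable (φ (n - 1)) (φ (n - 1 + 1)) := by
        rw [sub_add_cancel]
        exact fun h'' => h h''.symm
      have := ha h'
      omega
  have hpair : ({H.connectedComponentMk (φ (b + 1)), H.connectedComponentMk (φ a)} :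
      Set H.ConnectedComponent).encard ≤ 2 := by
    refine (Set.encard_insert_le _ _).trans ?_
    rw [Set.encard_singleton]
    norm_num
  refine (Set.encard_le_encard ?_).trans hpair
  intro c hc
  by_contra hcon
  simp only [Set.mem_insert_iff, Set.mem_singleton_iff, not_or] at hcon
  refine hc (((Set.finite_Ioo a (b + 1)).image φ).subset ?_)
  intro x hx
  obtain ⟨n, rfl⟩ := hφ.surjective x
  rw [SimpleGraph.ConnectedComponent.mem_supp_iff] at hx
  refine ⟨n, ⟨?_, ?_⟩, rfl⟩
  · by_contra h
    apply hcon.2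
    rw [← hx, SimpleGraph.ConnectedComponent.eq]
    exact (hdown n (by omega)).symm
  · by_contra h
    apply hcon.1
    rw [← hx, SimpleGraph.ConnectedComponent.eq]
    exact (hup n (by omega)).symm

end
end TZ

/-- A connected infinite graph of uniformly bounded degree admits a transitive
translation-like action by `ℤ` if and only if it has at most two ends. -/
theorem transitive_Z_action_iff_at_most_two_ends {V : Type*} (Γ : SimpleGraph V)
    [Infinite V] (hconn : Γ.Connected) (D : ℕ)
    (hdeg : ∀ v : V, (Γ.neighborSet v).encard ≤ D) :
    (∃ a : RightAction (Multiplicative ℤ) V, a.IsTransitive ∧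
       a.IsTranslationLike (graphDist Γ)) ↔
    graphEndsLE Γ 2 := by
  have hlf : ∀ v, (Γ.neighborSet v).Finite := fun v =>
    Set.finite_of_encard_le_coe (hdeg v)
  constructor
  · rintro ⟨a, htr, hfree, hbd⟩
    obtain ⟨x0⟩ := hconn.nonempty
    obtain ⟨C, hC⟩ := hbd (Multiplicative.ofAdd 1)
    refine TZ.forward hconn hlf (fun n => a.act x0 (Multiplicative.ofAdd n)) ⟨?_, ?_⟩ ⌈C⌉₊ ?_
    · intro m n hmn
      have h1 : a.act (a.act x0 (Multiplicative.ofAdd m)) (Multiplicative.ofAdd (n - m)) =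
          a.act x0 (Multiplicative.ofAdd m) := by
        rw [a.act_mul, ← ofAdd_add, add_sub_cancel]
        exact hmn.symm
      have h2 := hfree _ _ h1
      rw [ofAdd_eq_one] at h2
      omega
    · intro y
      obtain ⟨h, hh⟩ := htr x0 y
      exact ⟨h.toAdd, by simpa using hh⟩
    · intro n
      have := hC (a.act x0 (Multiplicative.ofAdd n))
      rw [a.act_mul, ← ofAdd_add] at this
      unfold graphDist at this
      exact_mod_cast this.trans (Nat.le_ceil C)
  · intro hE
    obtain ⟨φ, hφ, K, hK⟩ := TZ.backward hconn inferInstance hlf hE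
    let e : ℤ ≃ V := Equiv.ofBijective φ hφ
    have he : ∀ n, e n = φ n := fun _ => rfl
    have hmove : ∀ (k : ℕ) (n : ℤ), Γ.dist (φ n) (φ (n + k)) ≤ k * K := by
      intro k n
      induction k with
      | zero => simp
      | succ k ih =>
        have t := hconn.dist_triangle (u := φ n) (v := φ (n + k)) (w := φ (n + k + 1))
        have := hK (n + k)
        push_cast
        rw [← add_assoc, add_mul]
        omega
    refine ⟨⟨fun x h => e (e.symm x + h.toAdd), by simp, by simp [add_assoc]⟩, ?_, ?_, ?_⟩
    · intro x y
      exact ⟨Multiplicative.ofAdd (e.symm y - e.symm x), by simp⟩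
    · intro x h hx
      have : e.symm x + h.toAdd = e.symm x := by
        rw [Equiv.eq_symm_apply]
        exact hx
      have h0 : h.toAdd = 0 := by omega
      exact toAdd_eq_zero.1 h0
    · intro h
      refine ⟨((h.toAdd.natAbs * K : ℕ) : ℝ), fun x => ?_⟩
      simp only [graphDist]
      norm_cast
      obtain ⟨n, rfl⟩ := e.surjective x
      rw [Equiv.symm_apply_apply, he, he]
      rcases Int.natAbs_eq h.toAdd with h' | h'
      · conv_lhs => rw [h']
        exact hmove _ _
      · have := hmove h.toAdd.natAbs (n + h.toAdd)
        rw [Γ.dist_comm, show n + h.toAdd + (h.toAdd.natAbs : ℤ) = n by omega] at this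
        exact this
end

section
/- Let Λ₁ and Λ₂ be two trees. If every vertex of Λ₁ and of Λ₂ has degree at least three, and the vertex degrees of Λ₁ and Λ₂ are uniformly bounded, then Λ₁ and Λ₂ are bilipschitz equivalent. -/
open scoped Pointwise

/-- Two distance functions are bilipschitz equivalent if there is a bijection `f` and a
constant `c > 0` with `(1/c) d(x₁,x₂) ≤ ρ(f x₁, f x₂) ≤ c · d(x₁,x₂)`. -/
def BilipEquiv {X Y : Type*} (d : X → X → ℝ) (ρ : Y → Y → ℝ) : Prop :=
  ∃ (f : X → Y) (c : ℝ), Function.Bijective f ∧ 0 < c ∧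
    ∀ x₁ x₂ : X, (1 / c) * d x₁ x₂ ≤ ρ (f x₁) (f x₂) ∧ ρ (f x₁) (f x₂) ≤ c * d x₁ x₂

namespace TreeBilip

/-- One step of the encoding: the list of (sibling) roots of a forest is split in two. -/
def step {V : Type*} (ch : V → List V) : Bool → List V → List V
  | _, [] => []
  | true, [t] => (ch t).tail
  | false, [t] => (ch t).take 1
  | true, _ :: u :: rest => u :: rest
  | false, t :: _ :: _ => ch t

/-- The forest at an address. -/
def st {V : Type*} (ch : V → List V) : List V → List Bool → List V
  | S, [] => S
  | S, b :: l => st ch (step ch b S) l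

/-- Invariant of forests. -/
def Inv {V : Type*} (r : V) (ch : V → List V) (S : List V) : Prop :=
  S ≠ [] ∧ (S = [r] ∨ ∃ p, S.Sublist (ch p))

/-- Descendants of a forest. -/
def Desc {V : Type*} (par : V → V) (depth : V → ℕ) (S : List V) (x : V) : Prop :=
  ∃ t ∈ S, ∃ n, par^[n] x = t ∧ depth x = n + depth t

theorem st_append {V : Type*} (ch : V → List V) (l l' : List Bool) (S : List V) :
    st ch S (l ++ l') = st ch (st ch S l) l' := by
  induction l generalizing S with
  | nil => rfl
  | cons b l ih => simp [st, ih]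

theorem rooted {V : Type*} (r : V) (par : V → V) (depth : V → ℕ) (ch : V → List V) (D : ℕ)
    (hch : ∀ t x, x ∈ ch t ↔ x ≠ r ∧ par x = t)
    (hdepth : ∀ x, x ≠ r → depth x = depth (par x) + 1)
    (hnd : ∀ t, (ch t).Nodup) (h2 : ∀ t, 2 ≤ (ch t).length) (hD : ∀ t, (ch t).length ≤ D) :
    ∃ g : List Bool → V, Function.Bijective g ∧
      (∀ l b, g (l ++ [b]) ∈ ch (g l) ∨ ∃ p, g l ∈ ch p ∧ g (l ++ [b]) ∈ ch p) ∧
      (∀ x y, y ∈ ch x → ∃ l e, e.length ≤ D + 1 ∧ g l = x ∧ g (l ++ e) = y) := by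
  have hne : ∀ t, ∃ a b m, ch t = a :: b :: m := by
    intro t
    have := h2 t
    match h : ch t with
    | [] => simp [h] at this
    | [a] => simp [h] at this
    | a :: b :: m => exact ⟨a, b, m, rfl⟩
  have inv_step : ∀ S b, Inv r ch S → Inv r ch (step ch b S) := by
    rintro S b ⟨h0, h1⟩
    match b, S with
    | _, [] => simp at h0
    | true, [t] =>
      obtain ⟨a, b, m, h⟩ := hne t
      exact ⟨by simp [step, h], .inr ⟨t, List.tail_sublist _⟩⟩
    | false, [t] =>
      obtain ⟨a, b, m, h⟩ := hne t
      exact ⟨by simp [step, h], .inr ⟨t, List.take_sublist _ _⟩⟩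
    | true, t :: u :: rest =>
      refine ⟨by simp [step], .inr ?_⟩
      rcases h1 with h1 | ⟨p, hp⟩
      · simp at h1
      · exact ⟨p, (List.sublist_cons_self _ _).trans hp⟩
    | false, t :: u :: rest =>
      obtain ⟨a, b, m, h⟩ := hne t
      exact ⟨by simp [step, h], .inr ⟨t, List.Sublist.refl _⟩⟩
  have inv_st : ∀ l S, Inv r ch S → Inv r ch (st ch S l) := by
    intro l
    induction l with
    | nil => exact fun S h => h
    | cons b l ih => exact fun S h => ih _ (inv_step S b h)
  have inv_depth : ∀ S, Inv r ch S → ∀ x ∈ S, ∀ y ∈ S, depth x = depth y := by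
    rintro S ⟨h0, rfl | ⟨p, hp⟩⟩ x hx y hy
    · simp at hx hy; rw [hx, hy]
    · obtain ⟨hx1, hx2⟩ := (hch _ _).1 (hp.subset hx)
      obtain ⟨hy1, hy2⟩ := (hch _ _).1 (hp.subset hy)
      rw [hdepth x hx1, hdepth y hy1, hx2, hy2]
  have inv_nodup : ∀ S, Inv r ch S → S.Nodup := by
    rintro S ⟨h0, rfl | ⟨p, hp⟩⟩
    · simp
    · exact hp.nodup (hnd p)
  -- descendants of children are strict descendants
  have desc_ch : ∀ t x, Desc par depth (ch t) x → ∃ n, par^[n] x = t ∧ depth x = n + depth t ∧ 0 < n := by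
    rintro t x ⟨c, hc, n, hn, hd⟩
    obtain ⟨hc1, hc2⟩ := (hch _ _).1 hc
    refine ⟨n + 1, ?_, ?_, by omega⟩
    · rw [Function.iterate_succ_apply', hn, hc2]
    · rw [hd, hdepth c hc1, hc2]; omega
  have desc_mono : ∀ S S' x, S ⊆ S' → Desc par depth S x → Desc par depth S' x := by
    rintro S S' x h ⟨t, ht, h'⟩
    exact ⟨t, h ht, h'⟩
  have desc_step : ∀ S b x, Inv r ch S → Desc par depth (step ch b S) x →
      Desc par depth S x ∧ x ≠ S.headD r := by
    intro S b x hS hx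
    match b, S with
    | _, [] => simp [Inv] at hS
    | true, [t] =>
      obtain ⟨n, h1, h2, h3⟩ := desc_ch t x (desc_mono _ _ _ (List.tail_sublist _).subset hx)
      exact ⟨⟨t, by simp, n, h1, h2⟩, by rintro rfl; simp at h2; omega⟩
    | false, [t] =>
      obtain ⟨n, h1, h2, h3⟩ := desc_ch t x (desc_mono _ _ _ (List.take_sublist _ _).subset hx)
      exact ⟨⟨t, by simp, n, h1, h2⟩, by rintro rfl; simp at h2; omega⟩
    | true, t :: u :: rest =>
      refine ⟨desc_mono _ _ _ (List.sublist_cons_self _ _).subset hx, ?_⟩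
      rintro rfl
      obtain ⟨c, hc, n, hn, hd⟩ := hx
      simp only [step] at hc
      have h1 := inv_depth _ hS x (by simp) c (List.mem_cons_of_mem _ hc)
      have h2 := inv_nodup _ hS
      have : n = 0 := by omega
      subst this
      simp only [Function.iterate_zero, id] at hn
      subst hn
      exact (List.nodup_cons.1 h2).1 hc
    | false, t :: u :: rest =>
      obtain ⟨n, h1, h2, h3⟩ := desc_ch t x hx
      exact ⟨⟨t, by simp, n, h1, h2⟩, by rintro rfl; simp at h2; omega⟩
  have desc_disj : ∀ S x, Inv r ch S → Desc par depth (step ch true S) x →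
      Desc par depth (step ch false S) x → False := by
    intro S x hS hx hx'
    match S with
    | [] => simp [Inv] at hS
    | [t] =>
      obtain ⟨a, b, m, h⟩ := hne t
      obtain ⟨c, hc, n, hn, hd⟩ := hx
      obtain ⟨c', hc', n', hn', hd'⟩ := hx'
      simp only [step] at hc hc'
      have k := (hch _ _).1 ((List.tail_sublist _).subset hc)
      have k' := (hch _ _).1 ((List.take_sublist _ _).subset hc')
      have e := hdepth c k.1
      have e' := hdepth c' k'.1
      rw [k.2] at e
      rw [k'.2] at e'
      have : n = n' := by omega
      subst this
      have : c = c' := hn.symm.trans hn'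
      subst this
      have := hnd t
      rw [h] at hc hc' this
      simp at hc hc' this
      grind
    | t :: u :: rest =>
      obtain ⟨n', hn', hd', hp⟩ := desc_ch t x hx'
      obtain ⟨c, hc, n, hn, hd⟩ := hx
      simp only [step] at hc
      have h1 := inv_depth _ hS t (by simp) c (List.mem_cons_of_mem _ hc)
      have h2 := inv_nodup _ hS
      have : n = n' := by omega
      subst this
      have : c = t := hn.symm.trans hn'
      subst this
      exact (List.nodup_cons.1 h2).1 hc
  have head_mem : ∀ S, Inv r ch S → S.headD r ∈ S := by
    rintro S ⟨h, -⟩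
    cases S with
    | nil => simp at h
    | cons a S => simp
  have desc_st : ∀ l S, Inv r ch S → Desc par depth S ((st ch S l).headD r) := by
    intro l
    induction l with
    | nil => exact fun S hS => ⟨_, head_mem S hS, 0, rfl, by simp [st]⟩
    | cons b l ih => exact fun S hS => (desc_step S b _ hS (ih _ (inv_step S b hS))).1
  have inj : ∀ l l' S, Inv r ch S → (st ch S l).headD r = (st ch S l').headD r → l = l' := by
    intro l
    induction l with
    | nil =>
      rintro (_ | ⟨b, l'⟩) S hS h
      · rfl
      · exact absurd h.symm (desc_step S b _ hS (desc_st l' _ (inv_step S b hS))).2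
    | cons b l ih =>
      rintro (_ | ⟨b', l'⟩) S hS h
      · exact absurd h (desc_step S b _ hS (desc_st l _ (inv_step S b hS))).2
      · have k := desc_st l _ (inv_step S b hS)
        have k' := desc_st l' _ (inv_step S b' hS)
        simp only [st] at h
        by_cases hb : b = b'
        · subst hb
          rw [ih l' _ (inv_step S b hS) h]
        · exfalso
          rw [← h] at k'
          cases b <;> cases b' <;> simp at hb
          · exact desc_disj S _ hS k' k
          · exact desc_disj S _ hS k k'
  have reach : ∀ S : List V, ∀ y ∈ S, ∃ e : List Bool, e.length ≤ S.length ∧ (st ch S e).headD r = y := by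
    intro S
    induction S with
    | nil => simp
    | cons t S ih =>
      intro y hy
      rcases List.mem_cons.1 hy with rfl | hy
      · exact ⟨[], by simp, by simp [st]⟩
      · obtain ⟨e, he, h⟩ := ih y hy
        cases S with
        | nil => simp at hy
        | cons u S => exact ⟨true :: e, by simpa using he, by simpa [st, step] using h⟩
  have inv0 : Inv r ch [r] := ⟨by simp, .inl rfl⟩
  have key : ∀ l y, y ∈ ch ((st ch [r] l).headD r) → ∃ e : List Bool, e.length ≤ D + 1 ∧
      (st ch [r] (l ++ e)).headD r = y := by
    intro l y hy
    have hS := inv_st l _ inv0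
    generalize hSS : st ch [r] l = S at hS hy
    have : ∃ b, y ∈ step ch b S ∧ (step ch b S).length ≤ D := by
      match S with
      | [] => simp [Inv] at hS
      | [t] =>
        have hl := hD t
        obtain ⟨a, b, m, h⟩ := hne t
        simp only [List.headD_cons] at hy
        rw [h] at hy
        rcases List.mem_cons.1 hy with rfl | hy
        · exact ⟨false, by simp [step, h], by simp [step, h] at hl ⊢; omega⟩
        · exact ⟨true, by simpa [step, h] using hy, by simp [step, h] at hl ⊢; omega⟩
      | t :: u :: rest => exact ⟨false, hy, hD t⟩
    obtain ⟨b, hb, hl⟩ := this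
    obtain ⟨e, he, h⟩ := reach _ y hb
    refine ⟨b :: e, by simp; omega, ?_⟩
    rw [st_append, hSS]
    exact h
  refine ⟨fun l => (st ch [r] l).headD r, ⟨fun l l' h => inj l l' _ inv0 h, ?_⟩, ?_, ?_⟩
  · have : ∀ n x, depth x < n → ∃ l, (st ch [r] l).headD r = x := by
      intro n
      induction n with
      | zero => simp
      | succ n ih =>
        intro x hx
        by_cases hr : x = r
        · exact ⟨[], by simp [st, hr]⟩
        · have := hdepth x hr
          obtain ⟨l, hl⟩ := ih (par x) (by omega)
          obtain ⟨e, -, he⟩ := key l x (by rw [hl, hch]; exact ⟨hr, rfl⟩)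
          exact ⟨_, he⟩
    exact fun x => this _ x (Nat.lt_succ_self _)
  · intro l b
    simp only [st_append]
    have hS := inv_st l _ inv0
    generalize st ch [r] l = S at hS
    have hh := head_mem _ (inv_step S b hS)
    simp only [st]
    match b, S with
    | _, [] => simp [Inv] at hS
    | true, [t] => exact .inl ((List.tail_sublist _).subset hh)
    | false, [t] => exact .inl ((List.take_sublist _ _).subset hh)
    | true, t :: u :: rest =>
      rcases hS.2 with h1 | ⟨p, hp⟩
      · simp at h1
      · exact .inr ⟨p, hp.subset (by simp), hp.subset (List.mem_cons_of_mem _ hh)⟩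
    | false, t :: u :: rest => exact .inl hh
  · intro x y hy
    have : ∃ l, (st ch [r] l).headD r = x := by
      have : ∀ n x, depth x < n → ∃ l, (st ch [r] l).headD r = x := by
        intro n
        induction n with
        | zero => simp
        | succ n ih =>
          intro x hx
          by_cases hr : x = r
          · exact ⟨[], by simp [st, hr]⟩
          · have := hdepth x hr
            obtain ⟨l, hl⟩ := ih (par x) (by omega)
            obtain ⟨e, -, he⟩ := key l x (by rw [hl, hch]; exact ⟨hr, rfl⟩)
            exact ⟨_, he⟩
      exact this _ x (Nat.lt_succ_self _)
    obtain ⟨l, hl⟩ := this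
    obtain ⟨e, he, h⟩ := key l y (by rw [hl]; exact hy)
    exact ⟨l, e, he, hl, h⟩

theorem tree_coding {V : Type*} (Λ : SimpleGraph V) (hT : Λ.IsTree) (D : ℕ)
    (hdeg : ∀ v : V, 3 ≤ (Λ.neighborSet v).encard ∧ (Λ.neighborSet v).encard ≤ D) :
    ∃ g : List Bool → V, Function.Bijective g ∧
      (∀ l b, Λ.dist (g l) (g (l ++ [b])) ≤ 2) ∧
      (∀ x y, Λ.Adj x y → ∃ l e, e.length ≤ D + 1 ∧
        ((g l = x ∧ g (l ++ e) = y) ∨ (g l = y ∧ g (l ++ e) = x))) := by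
  classical
  obtain ⟨r⟩ := hT.connected.nonempty
  have hex : ∀ x, ∃ t, x ≠ r → Λ.Adj x t ∧ Λ.dist x r = Λ.dist t r + 1 := by
    intro x
    obtain ⟨p, hp⟩ := hT.connected.exists_walk_length_eq_dist x r
    cases p with
    | nil => exact ⟨r, fun h => absurd rfl h⟩
    | cons h q =>
      rename_i t
      refine ⟨t, fun _ => ⟨h, ?_⟩⟩
      have h1 := Λ.dist_le q
      have h2 := hT.dist_eq_dist_add_one_of_adj r h
      rw [Λ.dist_comm (u := r) (v := x), Λ.dist_comm (u := r) (v := t)] at h2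
      simp at hp
      omega
  choose par hpar using hex
  have huniq : ∀ x t t', Λ.Adj x t → Λ.Adj x t' → Λ.dist x r = Λ.dist t r + 1 →
      Λ.dist x r = Λ.dist t' r + 1 → t = t' := by
    intro x t t' h h' e e'
    obtain ⟨p, hp⟩ := hT.connected.exists_walk_length_eq_dist t r
    obtain ⟨p', hp'⟩ := hT.connected.exists_walk_length_eq_dist t' r
    have k : (SimpleGraph.Walk.cons h p).IsPath :=
      SimpleGraph.Walk.isPath_of_length_eq_dist _ (by simp; omega)
    have k' : (SimpleGraph.Walk.cons h' p').IsPath :=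
      SimpleGraph.Walk.isPath_of_length_eq_dist _ (by simp; omega)
    have := (hT.existsUnique_path x r).unique k k'
    simp at this
    exact this.1
  have hfin : ∀ t, (Λ.neighborSet t).Finite := fun t =>
    Set.finite_of_encard_le_coe (hdeg t).2
  let C : V → Set V := fun t => {y | Λ.Adj t y ∧ Λ.dist y r = Λ.dist t r + 1}
  have hCsub : ∀ t, C t ⊆ Λ.neighborSet t := fun t y hy => hy.1
  have hCfin : ∀ t, (C t).Finite := fun t => (hfin t).subset (hCsub t)
  let ch : V → List V := fun t => (hCfin t).toFinset.toList
  have hmem : ∀ t x, x ∈ ch t ↔ Λ.Adj t x ∧ Λ.dist x r = Λ.dist t r + 1 := by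
    intro t x
    simp [ch, C]
  have hlen : ∀ t, ((ch t).length : ℕ∞) = (C t).encard := by
    intro t
    simp [ch, (hCfin t).encard_eq_coe_toFinset_card]
  obtain ⟨g, hg, h1, h2⟩ := rooted r par (fun x => Λ.dist x r) ch D
    (by
      intro t x
      rw [hmem]
      constructor
      · rintro ⟨ha, hd⟩
        have hx : x ≠ r := by rintro rfl; simp at hd
        exact ⟨hx, huniq x _ _ (hpar x hx).1 ha.symm (hpar x hx).2 hd⟩
      · rintro ⟨hx, rfl⟩
        exact ⟨(hpar x hx).1.symm, (hpar x hx).2⟩)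
    (fun x hx => (hpar x hx).2)
    (fun t => Finset.nodup_toList _)
    (by
      intro t
      have hs : Λ.neighborSet t ⊆ insert (par t) (C t) := by
        intro y hy
        have hy' : Λ.Adj t y := hy
        have h2 := hT.dist_eq_dist_add_one_of_adj r hy'
        rw [Λ.dist_comm (u := r) (v := y), Λ.dist_comm (u := r) (v := t)] at h2
        rcases h2 with h2 | h2
        · left
          have ht : t ≠ r := by rintro rfl; simp at h2
          exact huniq t _ _ hy' (hpar t ht).1 h2 (hpar t ht).2
        · exact .inr ⟨hy', h2⟩
      have h3 := ((hdeg t).1.trans (Set.encard_le_encard hs)).trans (Set.encard_insert_le _ _)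
      rw [← hlen] at h3
      have : 3 ≤ (ch t).length + 1 := by exact_mod_cast h3
      omega)
    (by
      intro t
      have h3 := (Set.encard_le_encard (hCsub t)).trans (hdeg t).2
      rw [← hlen] at h3
      exact_mod_cast h3)
  refine ⟨g, hg, ?_, ?_⟩
  · intro l b
    rcases h1 l b with h | ⟨p, hp, hp'⟩
    · rw [SimpleGraph.dist_eq_one_iff_adj.2 ((hmem _ _).1 h).1]; omega
    · have e := SimpleGraph.dist_eq_one_iff_adj.2 ((hmem _ _).1 hp).1.symm
      have e' := SimpleGraph.dist_eq_one_iff_adj.2 ((hmem _ _).1 hp').1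
      have := hT.connected.dist_triangle (u := g l) (v := p) (w := g (l ++ [b]))
      omega
  · intro x y hxy
    have k := hT.dist_eq_dist_add_one_of_adj r hxy
    rw [Λ.dist_comm (u := r) (v := x), Λ.dist_comm (u := r) (v := y)] at k
    rcases k with k | k
    · obtain ⟨l, e, he, h⟩ := h2 y x ((hmem _ _).2 ⟨hxy.symm, k⟩)
      exact ⟨l, e, he, .inr h⟩
    · obtain ⟨l, e, he, h⟩ := h2 x y ((hmem _ _).2 ⟨hxy, k⟩)
      exact ⟨l, e, he, .inl h⟩

theorem lip {V W : Type*} (Γ : SimpleGraph V) (Δ : SimpleGraph W) (hΓ : Γ.Connected)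
    (hΔ : Δ.Connected) (D : ℕ) (g : List Bool → V) (h : List Bool → W)
    (hg : Function.Bijective g)
    (hadj : ∀ x y, Γ.Adj x y → ∃ l e, e.length ≤ D + 1 ∧
        ((g l = x ∧ g (l ++ e) = y) ∨ (g l = y ∧ g (l ++ e) = x)))
    (hh : ∀ l b, Δ.dist (h l) (h (l ++ [b])) ≤ 2) (a b : List Bool) :
    Δ.dist (h a) (h b) ≤ (2 * (D + 1)) * Γ.dist (g a) (g b) := by
  have hext : ∀ e l, Δ.dist (h l) (h (l ++ e)) ≤ 2 * e.length := by
    intro e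
    induction e with
    | nil => simp
    | cons c e ih =>
      intro l
      have h1 := hh l c
      have h2 := ih (l ++ [c])
      have h3 := hΔ.dist_triangle (u := h l) (v := h (l ++ [c])) (w := h (l ++ c :: e))
      simp at h2 ⊢
      omega
  have hwalk : ∀ x y (p : Γ.Walk x y), ∀ a b, g a = x → g b = y →
      Δ.dist (h a) (h b) ≤ (2 * (D + 1)) * p.length := by
    intro x y p
    induction p with
    | nil =>
      intro a b ha hb
      rw [hg.1 (ha.trans hb.symm)]; simp
    | cons hxy p ih =>
      rename_i u v w
      intro a b ha hb
      obtain ⟨c, hc⟩ := hg.2 v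
      have h2 := ih c b hc hb
      have h3 := hΔ.dist_triangle (u := h a) (v := h c) (w := h b)
      have h1 : Δ.dist (h a) (h c) ≤ 2 * (D + 1) := by
        obtain ⟨l, e, he, ⟨k1, k2⟩ | ⟨k1, k2⟩⟩ := hadj _ _ hxy
        · have e1 := hg.1 (k1.trans ha.symm)
          have e2 := hg.1 (k2.trans hc.symm)
          have := hext e l
          rw [e2, e1] at this
          omega
        · have e1 := hg.1 (k1.trans hc.symm)
          have e2 := hg.1 (k2.trans ha.symm)
          have := hext e l
          rw [e2, e1, Δ.dist_comm] at this
          omega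
      rw [SimpleGraph.Walk.length_cons, mul_add]
      omega
  obtain ⟨p, hp⟩ := hΓ.exists_walk_length_eq_dist (g a) (g b)
  rw [← hp]
  exact hwalk _ _ p a b rfl rfl

end TreeBilip

/-- Two trees all of whose vertices have degree at least three and uniformly bounded
degree are bilipschitz equivalent. -/
theorem trees_bilipschitz_equivalent {V₁ : Type*} {V₂ : Type*}
    (Λ₁ : SimpleGraph V₁) (Λ₂ : SimpleGraph V₂)
    (h₁ : Λ₁.IsTree) (h₂ : Λ₂.IsTree) (D : ℕ)
    (hdeg₁ : ∀ v : V₁, 3 ≤ (Λ₁.neighborSet v).encard ∧ (Λ₁.neighborSet v).encard ≤ D)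
    (hdeg₂ : ∀ v : V₂, 3 ≤ (Λ₂.neighborSet v).encard ∧ (Λ₂.neighborSet v).encard ≤ D) :
    BilipEquiv (graphDist Λ₁) (graphDist Λ₂) := by
  obtain ⟨g₁, hg₁, a₁, b₁⟩ := TreeBilip.tree_coding Λ₁ h₁ D hdeg₁
  obtain ⟨g₂, hg₂, a₂, b₂⟩ := TreeBilip.tree_coding Λ₂ h₂ D hdeg₂
  let E := Equiv.ofBijective g₁ hg₁
  have hE : ∀ x, g₁ (E.symm x) = x := fun x => E.apply_symm_apply x
  have hc : (0 : ℝ) < 2 * (D + 1) := by positivity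
  refine ⟨fun x => g₂ (E.symm x), 2 * (D + 1), hg₂.comp E.symm.bijective, hc, ?_⟩
  intro x y
  have k₁ := TreeBilip.lip Λ₁ Λ₂ h₁.connected h₂.connected D g₁ g₂ hg₁ b₁ a₂ (E.symm x) (E.symm y)
  have k₂ := TreeBilip.lip Λ₂ Λ₁ h₂.connected h₁.connected D g₂ g₁ hg₂ b₂ a₁ (E.symm x) (E.symm y)
  rw [hE, hE] at k₁ k₂
  simp only [graphDist]
  constructor
  · rw [one_div, inv_mul_le_iff₀ hc]
    exact_mod_cast k₂
  · exact_mod_cast k₁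
end

section
/- Let Λ be a tree with a distinguished root vertex λ, and let r ≥ 3 be an integer. If 2 ≤ deg(λ) ≤ r − 1 and every vertex of Λ other than λ has degree at least 3, then there exist a perimeter P of Λ of radius at most r and a function d : P → ℕ⁺ such that d(p) ≤ deg(p) − 1 for every p ∈ P and Σ_{p ∈ P} d(p) = r. -/
open scoped Pointwise

/-- In a tree with root `root`, `treeLE Γ root u v` says that the unique shortest path
from `root` to `v` traverses `u` (i.e. `u ≼ v` in the tree order). -/
def treeLE {V : Type*} (Γ : SimpleGraph V) (root u v : V) : Prop :=
  Γ.dist root u + Γ.dist u v = Γ.dist root v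

namespace PerimeterAux

variable {V : Type*}

/-- Children of a vertex. -/
def children (Γ : SimpleGraph V) (root v : V) : Set V :=
  {c | Γ.Adj v c ∧ Γ.dist root c = Γ.dist root v + 1}

theorem le_refl' (Γ : SimpleGraph V) (root v : V) : treeLE Γ root v v := by
  simp [treeLE]

theorem le_trans' {Γ : SimpleGraph V} (hc : Γ.Connected) {root u v w : V}
    (h1 : treeLE Γ root u v) (h2 : treeLE Γ root v w) : treeLE Γ root u w := by
  unfold treeLE at *
  have := hc.dist_triangle (u := u) (v := v) (w := w)
  have := hc.dist_triangle (u := root) (v := u) (w := w)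
  omega

theorem child_le {Γ : SimpleGraph V} {root v c : V}
    (h : c ∈ children Γ root v) : treeLE Γ root v c := by
  obtain ⟨h1, h2⟩ := h
  unfold treeLE
  rw [SimpleGraph.dist_eq_one_iff_adj.2 h1, h2]

theorem exists_child {Γ : SimpleGraph V} (hc : Γ.Connected) {root v u : V}
    (h : treeLE Γ root v u) (hne : v ≠ u) :
    ∃ c ∈ children Γ root v, treeLE Γ root c u := by
  obtain ⟨p, hp⟩ := hc.exists_walk_length_eq_dist v u
  cases p with
  | nil => exact absurd rfl hne
  | @cons _ c _ hadj q =>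
    simp only [SimpleGraph.Walk.length_cons] at hp
    have h1 := SimpleGraph.dist_le q
    have h2 := hc.dist_triangle (u := root) (v := c) (w := u)
    have h3 := hc.dist_triangle (u := root) (v := v) (w := c)
    have h4 := SimpleGraph.dist_eq_one_iff_adj.2 hadj
    unfold treeLE at *
    refine ⟨c, ⟨hadj, by omega⟩, ?_⟩
    omega

theorem eq_of_le {Γ : SimpleGraph V} (hT : Γ.IsTree) {root a b w : V}
    (ha : treeLE Γ root a w) (hb : treeLE Γ root b w)
    (hd : Γ.dist root a = Γ.dist root b) : a = b := by
  have hc := hT.connected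
  have key : ∀ x, treeLE Γ root x w → ∃ p : Γ.Walk root w, p.IsPath ∧
      p.getVert (Γ.dist root x) = x := by
    intro x hx
    obtain ⟨p, hp⟩ := hc.exists_walk_length_eq_dist root x
    obtain ⟨q, hq⟩ := hc.exists_walk_length_eq_dist x w
    refine ⟨p.append q, ?_, ?_⟩
    · apply SimpleGraph.Walk.isPath_of_length_eq_dist
      rw [SimpleGraph.Walk.length_append, hp, hq]
      exact hx
    · rw [SimpleGraph.Walk.getVert_append, hp]
      simp
  obtain ⟨p, hp, hpa⟩ := key a ha
  obtain ⟨q, hq, hqb⟩ := key b hb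
  have : p = q := congrArg Subtype.val ((hT.isAcyclic.subsingleton_path root w).elim ⟨p, hp⟩ ⟨q, hq⟩)
  rw [← hpa, ← hqb, this, hd]

theorem children_root {Γ : SimpleGraph V} {root : V} :
    children Γ root root = Γ.neighborSet root := by
  ext c
  simp only [children, Set.mem_ofPred_eq, SimpleGraph.mem_neighborSet, SimpleGraph.dist_self]
  constructor
  · exact fun h => h.1
  · exact fun h => ⟨h, by rw [SimpleGraph.dist_eq_one_iff_adj.2 h]⟩

theorem children_encard {Γ : SimpleGraph V} (hT : Γ.IsTree) {root v : V} (hv : v ≠ root) :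
    (children Γ root v).encard = (Γ.neighborSet v).encard - 1 := by
  have hc := hT.connected
  obtain ⟨p, hp⟩ := hc.exists_walk_length_eq_dist v root
  cases p with
  | nil => exact absurd rfl hv
  | @cons _ c _ hadj q =>
    simp only [SimpleGraph.Walk.length_cons] at hp
    have h1 := SimpleGraph.dist_le q
    have h4 := SimpleGraph.dist_eq_one_iff_adj.2 hadj
    have h5 := hc.dist_triangle (u := v) (v := c) (w := root)
    rw [SimpleGraph.dist_comm (u := v) (v := root)] at *
    rw [SimpleGraph.dist_comm (u := c) (v := root)] at *
    have hcv : treeLE Γ root c v := by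
      unfold treeLE
      rw [SimpleGraph.dist_comm (u := c) (v := v)]
      omega
    have : children Γ root v = Γ.neighborSet v \ {c} := by
      ext x
      simp only [children, Set.mem_ofPred_eq, Set.mem_sdiff, SimpleGraph.mem_neighborSet,
        Set.mem_singleton_iff]
      constructor
      · rintro ⟨hx, hx2⟩
        refine ⟨hx, ?_⟩
        rintro rfl
        omega
      · rintro ⟨hx, hx2⟩
        refine ⟨hx, ?_⟩
        have h6 := SimpleGraph.dist_eq_one_iff_adj.2 hx
        have h7 := hc.dist_triangle (u := root) (v := v) (w := x)
        have h8 := hc.dist_triangle (u := root) (v := x) (w := v)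
        rw [SimpleGraph.dist_comm (u := x) (v := v)] at h8
        have h9 : Γ.dist root v ≠ Γ.dist root x := hT.dist_ne_of_adj root hx
        by_contra h10
        apply hx2
        refine eq_of_le hT (w := v) ?_ hcv (by omega)
        unfold treeLE
        rw [SimpleGraph.dist_comm (u := x) (v := v)]
        omega
    rw [this, Set.encard_sdiff_singleton_of_mem ((Γ.mem_neighborSet v c).2 hadj)]

/-- A perimeter of the subtree above `v` with weight `N`. -/
def Good (Γ : SimpleGraph V) (root v : V) (N : ℕ) (P : Finset V) (d : V → ℕ) : Prop :=
  (∀ p ∈ P, treeLE Γ root v p) ∧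
  (∀ p ∈ P, 1 ≤ d p ∧ (d p : ℕ∞) ≤ (Γ.neighborSet p).encard - 1) ∧
  (∀ p ∈ P, ∀ p' ∈ P, treeLE Γ root p p' → p = p') ∧
  (∀ u, treeLE Γ root v u → Γ.dist root v + N ≤ Γ.dist root u + 1 →
    ∃ p ∈ P, treeLE Γ root p u) ∧
  ∑ p ∈ P, d p = N

open Classical in
theorem step {Γ : SimpleGraph V} (hT : Γ.IsTree) {root v : V} {N : ℕ} (C : Finset V)
    (hC : (C : Set V) = children Γ root v) (h2 : 2 ≤ C.card) (hN : C.card < N)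
    (hg : ∀ c ∈ C, ∀ m, 1 ≤ m → m < N → ∃ P d, Good Γ root c m P d) :
    ∃ P d, Good Γ root v N P d ∧ v ∉ P := by
  have hc := hT.connected
  have hC' : ∀ c, c ∈ C ↔ c ∈ children Γ root v := fun c => by rw [← hC]; simp
  obtain ⟨c0, hc0⟩ : C.Nonempty := Finset.card_pos.1 (by omega)
  let n : V → ℕ := fun c => if c = c0 then N - (C.card - 1) else 1
  have hn1 : ∀ c, 1 ≤ n c := by intro c; simp only [n]; split_ifs <;> omega
  have hn2 : ∀ c, n c < N := by intro c; simp only [n]; split_ifs <;> omega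
  have hsum : ∑ c ∈ C, n c = N := by
    rw [← Finset.add_sum_erase C n hc0]
    have : ∑ c ∈ C.erase c0, n c = ∑ c ∈ C.erase c0, 1 :=
      Finset.sum_congr rfl fun c h => by simp [n, Finset.ne_of_mem_erase h]
    rw [this, Finset.sum_const, Finset.card_erase_of_mem hc0]
    simp only [n, if_true, smul_eq_mul]
    omega
  have hg' : ∀ c, ∃ P d, c ∈ C → Good Γ root c (n c) P d := by
    intro c
    by_cases h : c ∈ C
    · obtain ⟨P, d, h'⟩ := hg c h (n c) (hn1 c) (hn2 c)
      exact ⟨P, d, fun _ => h'⟩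
    · exact ⟨∅, 0, fun h' => absurd h' h⟩
  choose P d hPd using hg'
  have huniq : ∀ c ∈ C, ∀ c' ∈ C, ∀ p ∈ P c, ∀ p' ∈ P c', treeLE Γ root p p' → c = c' := by
    intro c h c' h' p hp p' hp' hle
    refine eq_of_le hT (le_trans' hc ((hPd c h).1 p hp) hle) ((hPd c' h').1 p' hp') ?_
    rw [((hC' c).1 h).2, ((hC' c').1 h').2]
  let D : V → ℕ := fun u => ∑ c ∈ C, if u ∈ P c then d c u else 0
  have hD : ∀ c ∈ C, ∀ p ∈ P c, D p = d c p := by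
    intro c h p hp
    simp only [D]
    rw [Finset.sum_eq_single c]
    · simp [hp]
    · intro b hb hbc
      rw [if_neg]
      intro hpb
      exact hbc (huniq b hb c h p hpb p hp (le_refl' _ _ _))
    · exact fun h' => absurd h h'
  refine ⟨C.biUnion P, D, ⟨?_, ?_, ?_, ?_, ?_⟩, ?_⟩
  · intro p hp
    obtain ⟨c, h, hp⟩ := Finset.mem_biUnion.1 hp
    exact le_trans' hc (child_le ((hC' c).1 h)) ((hPd c h).1 p hp)
  · intro p hp
    obtain ⟨c, h, hp⟩ := Finset.mem_biUnion.1 hp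
    rw [hD c h p hp]
    exact (hPd c h).2.1 p hp
  · intro p hp p' hp' hle
    obtain ⟨c, h, hp⟩ := Finset.mem_biUnion.1 hp
    obtain ⟨c', h', hp'⟩ := Finset.mem_biUnion.1 hp'
    obtain rfl := huniq c h c' h' p hp p' hp' hle
    exact (hPd c h).2.2.1 p hp p' hp' hle
  · intro u hu hdu
    obtain ⟨c, h, hcu⟩ := exists_child hc hu (by rintro rfl; omega)
    obtain ⟨p, hp, hpu⟩ := (hPd c ((hC' c).2 h)).2.2.2.1 u hcu (by
      have := hn2 c
      rw [h.2]; omega)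
    exact ⟨p, Finset.mem_biUnion.2 ⟨c, (hC' c).2 h, hp⟩, hpu⟩
  · rw [Finset.sum_biUnion]
    · rw [← hsum]
      refine Finset.sum_congr rfl fun c h => ?_
      rw [Finset.sum_congr rfl (hD c h)]
      exact (hPd c h).2.2.2.2
    · intro c h c' h' hne
      refine Finset.disjoint_left.2 fun p hp hp' => hne ?_
      exact huniq c h c' h' p hp p hp' (le_refl' _ _ _)
  · intro hp
    obtain ⟨c, h, hp⟩ := Finset.mem_biUnion.1 hp
    have h1 := (hPd c h).1 v hp
    have h2 := ((hC' c).1 h).2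
    unfold treeLE at h1
    omega

theorem good {Γ : SimpleGraph V} (hT : Γ.IsTree) {root : V}
    (hdeg : ∀ v : V, v ≠ root → 3 ≤ (Γ.neighborSet v).encard) (N : ℕ) :
    ∀ v, v ≠ root → 1 ≤ N → ∃ P d, Good Γ root v N P d := by
  induction N using Nat.strong_induction_on with
  | _ N ih =>
    intro v hv hN
    by_cases h : (N : ℕ∞) ≤ (Γ.neighborSet v).encard - 1
    · refine ⟨{v}, fun _ => N, ?_, ?_, ?_, ?_, ?_⟩
      · simp [le_refl']
      · simp [hN, h]
      · simp
      · intro u hu _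
        exact ⟨v, by simp, hu⟩
      · simp
    · rw [← children_encard hT hv] at h
      push Not at h
      have hfin : (children Γ root v).Finite := Set.finite_of_encard_le_coe h.le
      have h2 : 2 ≤ (children Γ root v).encard := by
        rw [children_encard hT hv]
        exact le_trans (by decide) (tsub_le_tsub_right (hdeg v hv) 1)
      rw [hfin.encard_eq_coe_toFinset_card] at h h2
      obtain ⟨P, d, hP, _⟩ := step hT (root := root) (v := v) (N := N) hfin.toFinset (by simp) (by exact_mod_cast h2)
        (by exact_mod_cast h) (by
          intro c hcc m hm hmN
          refine ih m hmN c ?_ hm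
          rintro rfl
          have := ((Set.Finite.mem_toFinset _).1 hcc).2
          simp at this)
      exact ⟨P, d, hP⟩

end PerimeterAux

open PerimeterAux in
/-- The perimeter lemma: if `Λ` is a tree with root of degree between `2` and `r-1` and all
other vertices of degree at least `3`, then there is a perimeter `P` of radius at most `r`
and a function `d : P → ℕ⁺` with `d p ≤ deg p − 1` and `∑_{p ∈ P} d p = r`. -/
theorem perimeter_lemma {V : Type*} (Λ : SimpleGraph V) (root : V) (hT : Λ.IsTree)
    (r : ℕ) (hr : 3 ≤ r)
    (hroot_lb : 2 ≤ (Λ.neighborSet root).encard)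
    (hroot_ub : (Λ.neighborSet root).encard ≤ ((r - 1 : ℕ) : ℕ∞))
    (hdeg : ∀ v : V, v ≠ root → 3 ≤ (Λ.neighborSet v).encard) :
    ∃ (P : Finset V) (d : V → ℕ),
      (P : Set V) ≠ {root} ∧
      (∀ p ∈ P, ∀ p' ∈ P, treeLE Λ root p p' → p = p') ∧
      (∀ u : V, r ≤ Λ.dist root u → ∃ p ∈ P, treeLE Λ root p u) ∧
      (∀ p ∈ P, 1 ≤ d p ∧ (d p : ℕ∞) ≤ (Λ.neighborSet p).encard - 1) ∧
      ∑ p ∈ P, d p = r := by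
  rw [← children_root] at hroot_lb hroot_ub
  have hfin : (children Λ root root).Finite := Set.finite_of_encard_le_coe hroot_ub
  rw [hfin.encard_eq_coe_toFinset_card] at hroot_lb hroot_ub
  have hub : hfin.toFinset.card ≤ r - 1 := by exact_mod_cast hroot_ub
  obtain ⟨P, d, hP, hv⟩ := step hT (root := root) (v := root) (N := r) hfin.toFinset (by simp) (by exact_mod_cast hroot_lb)
    (by omega) (by
      intro c hcc m hm hmN
      refine good hT hdeg m c ?_ hm
      rintro rfl
      have := ((Set.Finite.mem_toFinset _).1 hcc).2
      simp at this)
  refine ⟨P, d, ?_, hP.2.2.1, ?_, hP.2.1, hP.2.2.2.2⟩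
  · intro h
    apply hv
    have : root ∈ (P : Set V) := by rw [h]; simp
    simpa using this
  · intro u hu
    refine hP.2.2.2.1 u (by simp [treeLE]) ?_
    simp only [SimpleGraph.dist_self]
    omega
end

section
/- Let G be a finitely generated group and k ≥ 2 an integer. The following are equivalent: (i) G is non-amenable; (ii) G admits a translation-like action by the non-abelian free group F_k of rank k; (iii) G admits a transitive translation-like action by F_k. -/
open scoped Pointwise

/-- `S` is a finite generating set of the group `G`. -/
def IsFinGenSet {G : Type*} [Group G] (S : Set G) : Prop :=
  S.Finite ∧ Subgroup.closure S = ⊤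

/-- The left-invariant word-length distance associated to a generating set `S`:
`wordDist S g h` is the least `n` with `g⁻¹ * h ∈ (S ∪ S⁻¹) ^ n`. -/
noncomputable def wordDist {G : Type*} [Group G] (S : Set G) (g h : G) : ℕ :=
  sInf {n : ℕ | g⁻¹ * h ∈ (S ∪ S⁻¹) ^ n}

/-- The word metric as a real-valued distance function. -/
noncomputable def wordMetric {G : Type*} [Group G] (S : Set G) : G → G → ℝ :=
  fun g h => (wordDist S g h : ℝ)

/-- The (right) Cayley graph of a group w.r.t. a set `S`: `g` and `gs` are adjacent
for `s ∈ S ∪ S⁻¹`. -/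
def cayleyGraph {G : Type*} [Group G] (S : Set G) : SimpleGraph G :=
  SimpleGraph.fromRel (fun g h => g⁻¹ * h ∈ S ∪ S⁻¹)

/-- `nbhd Γ k S` is the union of `S` with all vertices within path-distance `k` of `S`. -/
def nbhd {V : Type*} (Γ : SimpleGraph V) (k : ℕ) (S : Finset V) : Set V :=
  {v : V | ∃ s ∈ S, Γ.Reachable s v ∧ Γ.dist s v ≤ k}

/-- A graph is non-amenable if there are `C > 1` and `k ∈ ℕ` with `|N_k(S)| ≥ C·|S|`
for every finite vertex set `S`. -/
def GraphNonamenable {V : Type*} (Γ : SimpleGraph V) : Prop :=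
  ∃ C : ℝ, 1 < C ∧ ∃ k : ℕ, ∀ S : Finset V,
    (nbhd Γ k S).Infinite ∨ C * S.card ≤ ((nbhd Γ k S).ncard : ℝ)

/-- A finitely generated group is non-amenable if its Cayley graphs (w.r.t. finite
generating sets) are non-amenable. -/
def GroupNonamenable (G : Type*) [Group G] : Prop :=
  ∀ S : Set G, IsFinGenSet S → GraphNonamenable (cayleyGraph S)


theorem gvn_toWord_mul {α : Type*} [DecidableEq α] (l : α × Bool) (g : FreeGroup α)
    (h : g.toWord.head? ≠ some (l.1, !l.2)) :
    (FreeGroup.mk [l] * g).toWord = l :: g.toWord := by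
  have h1 : FreeGroup.IsReduced (l :: g.toWord) := by
    have h2 : FreeGroup.IsReduced g.toWord := FreeGroup.isReduced_toWord
    revert h h2
    cases g.toWord with
    | nil => intro _ _; exact FreeGroup.IsReduced.singleton
    | cons b t =>
      intro h h2
      refine List.isChain_cons_cons.2 ⟨?_, h2⟩
      intro hab
      by_contra hne
      apply h
      obtain ⟨a, x⟩ := l
      obtain ⟨b, y⟩ := b
      simp at hab hne ⊢
      subst hab
      refine ⟨rfl, ?_⟩
      cases x <;> cases y <;> simp_all
  rw [FreeGroup.toWord_mul, FreeGroup.toWord_mk]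
  have : FreeGroup.reduce [l] = [l] := FreeGroup.IsReduced.singleton.reduce_eq
  rw [this]
  exact h1.reduce_eq

/-- If the word starts with the inverse letter, the product removes it. -/
theorem gvn_toWord_mul_cancel {α : Type*} [DecidableEq α] (l : α × Bool) (g : FreeGroup α)
    (h : g.toWord.head? = some (l.1, !l.2)) :
    g.toWord = (l.1, !l.2) :: (FreeGroup.mk [l] * g).toWord := by
  set g' := FreeGroup.mk [l] * g with hg'
  have hg : g = FreeGroup.mk [(l.1, !l.2)] * g' := by
    rw [hg', ← mul_assoc]
    have : FreeGroup.mk [(l.1, !l.2)] = (FreeGroup.mk [l])⁻¹ := by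
      simp [FreeGroup.inv_mk, FreeGroup.invRev]
    rw [this, inv_mul_cancel, one_mul]
  by_cases h2 : g'.toWord.head? = some (l.1, !(!l.2))
  · exfalso
    obtain ⟨t, ht⟩ : ∃ t, g.toWord = (l.1, !l.2) :: t := by
      cases hw : g.toWord with
      | nil => simp [hw] at h
      | cons b t => simp [hw] at h; exact ⟨t, by rw [h]⟩
    have hred : FreeGroup.IsReduced ((l.1, !l.2) :: t) := ht ▸ FreeGroup.isReduced_toWord
    have htr : FreeGroup.IsReduced t := hred.tail
    have e1 : g = FreeGroup.mk ((l.1, !l.2) :: t) := by rw [← ht, FreeGroup.mk_toWord]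
    have e2 : g' = FreeGroup.mk t := by
      rw [hg', e1, FreeGroup.mul_mk]
      have : FreeGroup.mk ([l] ++ (l.1, !l.2) :: t) = FreeGroup.mk ([] ++ t) := by
        apply Quot.sound
        exact FreeGroup.Red.Step.not (L₁ := [])
      exact this
    have e3 : g'.toWord = t := by rw [e2, FreeGroup.toWord_mk, htr.reduce_eq]
    rw [e3] at h2
    cases t with
    | nil => simp at h2
    | cons b s =>
      have := (List.isChain_cons_cons.1 hred).1
      simp at h2
      subst h2
      simp at this
  · conv_lhs => rw [hg]
    exact gvn_toWord_mul (l.1, !l.2) g' h2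

/-- Rooted tree with a root having `2k` children, other vertices `2k-1` children: it is
a copy of the Cayley tree of the free group. -/
theorem gvn_bij {X : Type*} (k : ℕ) (r : X) (q : X → X) (idx : X → ℕ)
    (bd : X → ℕ) (hbr : bd r = 2 * k) (hbx : ∀ x, x ≠ r → bd x = 2 * k - 1)
    (h1 : ∀ y, y ≠ r → idx y < bd (q y))
    (h2 : ∀ x i, i < bd x → ∃ y, y ≠ r ∧ q y = x ∧ idx y = i)
    (h3 : ∀ y z, y ≠ r → z ≠ r → q y = q z → idx y = idx z → y = z)
    (hind : ∀ P : X → Prop, P r → (∀ y, y ≠ r → P (q y) → P y) → ∀ y, P y) :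
    ∃ β : FreeGroup (Fin k) ≃ X, ∀ l g,
      (β (FreeGroup.mk [l] * g) ≠ r ∧ q (β (FreeGroup.mk [l] * g)) = β g) ∨
      (β g ≠ r ∧ q (β g) = β (FreeGroup.mk [l] * g)) := by
  classical
  choose ch hch using h2
  -- letter indexing
  let A : Option (Fin k × Bool) → Finset (Fin k × Bool) := fun o =>
    match o with
    | none => Finset.univ
    | some l => Finset.univ.erase (l.1, !l.2)
  let nn : Option (Fin k × Bool) → ℕ := fun o =>
    match o with
    | none => 2 * k
    | some l => 2 * k - 1
  have hcard : ∀ o, (A o).card = nn o := by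
    intro o
    cases o with
    | none => simp [A, nn, mul_comm]
    | some l => simp [A, nn, mul_comm]
  have he : ∀ o, ∃ e : Fin k × Bool → ℕ, Set.BijOn e (A o) (Set.Iio (nn o)) := by
    intro o
    have : (A o).card = (Finset.range (nn o)).card := by simp [hcard]
    obtain ⟨e, he⟩ := (A o).finite_toSet.exists_bijOn_of_encard_eq
      (t := (Finset.range (nn o) : Set ℕ)) (by simp only [Set.encard_coe_eq_coe_finsetCard, this])
    exact ⟨e, by simpa using he⟩
  choose e he using he
  let c : X → ℕ → X := fun x i => if h : i < bd x then ch x i h else r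
  have hc : ∀ x i, i < bd x → c x i ≠ r ∧ q (c x i) = x ∧ idx (c x i) = i := by
    intro x i h
    simp only [c, dif_pos h]
    exact hch x i h
  let βL : List (Fin k × Bool) → X := fun w => List.rec r (fun l w x => c x (e w.head? l)) w
  have βnil : βL [] = r := rfl
  have βcons : ∀ l w, βL (l :: w) = c (βL w) (e w.head? l) := fun _ _ => rfl
  have hredA : ∀ l w, FreeGroup.IsReduced (l :: w) ↔ FreeGroup.IsReduced w ∧ l ∈ A w.head? := by
    intro l w
    cases w with
    | nil => simp [A]
    | cons b t =>
      obtain ⟨a, x⟩ := l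
      obtain ⟨b, y⟩ := b
      simp only [FreeGroup.IsReduced, List.isChain_cons_cons, A, List.head?_cons]
      rw [and_comm]
      refine and_congr_right fun _ => ?_
      cases x <;> cases y <;> simp
  have hbd : ∀ w, FreeGroup.IsReduced w → bd (βL w) = nn w.head? ∧ (w ≠ [] → βL w ≠ r) := by
    intro w
    induction w with
    | nil => intro _; simp [βnil, hbr, nn]
    | cons l w ih =>
      intro hr
      obtain ⟨hw, hl⟩ := (hredA l w).1 hr
      obtain ⟨i1, i2⟩ := ih hw
      have hlt : e w.head? l < bd (βL w) := by
        rw [i1]; exact (he w.head?).mapsTo hl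
      have := hc _ _ hlt
      rw [← βcons] at this
      refine ⟨?_, fun _ => this.1⟩
      rw [hbx _ this.1]; simp [nn]
  have hstep : ∀ l w, FreeGroup.IsReduced (l :: w) →
      βL (l :: w) ≠ r ∧ q (βL (l :: w)) = βL w ∧ idx (βL (l :: w)) = e w.head? l := by
    intro l w hr
    obtain ⟨hw, hl⟩ := (hredA l w).1 hr
    have hlt : e w.head? l < bd (βL w) := by
      rw [(hbd w hw).1]; exact (he w.head?).mapsTo hl
    exact hc _ _ hlt
  have hinj : ∀ w w', FreeGroup.IsReduced w → FreeGroup.IsReduced w' → βL w = βL w' → w = w' := by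
    intro w
    induction w with
    | nil =>
      intro w' _ h' heq
      by_contra hne
      exact (hbd w' h').2 (Ne.symm hne) heq.symm
    | cons l w ih =>
      intro w' h h' heq
      cases w' with
      | nil => exact absurd heq ((hbd _ h).2 (by simp))
      | cons l' w' =>
        obtain ⟨_, a2, a3⟩ := hstep l w h
        obtain ⟨_, b2, b3⟩ := hstep l' w' h'
        have hh := (hredA l w).1 h
        have hh' := (hredA l' w').1 h'
        have hw : w = w' := ih w' hh.1 hh'.1 (by rw [← a2, ← b2, heq])
        subst hw
        have : l = l' := (he w.head?).injOn hh.2 hh'.2 (by rw [← a3, ← b3, heq])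
        rw [this]
  have hsurj : ∀ y, ∃ w, FreeGroup.IsReduced w ∧ βL w = y := by
    apply hind
    · exact ⟨[], FreeGroup.IsReduced.nil, rfl⟩
    · rintro y hy ⟨w, hw, hwy⟩
      have hlt := h1 y hy
      rw [← hwy, (hbd w hw).1] at hlt
      obtain ⟨l, hl, hle⟩ := (he w.head?).surjOn hlt
      have hr := (hredA l w).2 ⟨hw, hl⟩
      obtain ⟨a1, a2, a3⟩ := hstep l w hr
      exact ⟨l :: w, hr, h3 _ _ a1 hy (by rw [a2, hwy]) (by rw [a3, hle])⟩
  let β0 : FreeGroup (Fin k) → X := fun g => βL g.toWord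
  have hbij : Function.Bijective β0 := by
    constructor
    · intro g g' h
      exact FreeGroup.toWord_injective
        (hinj _ _ FreeGroup.isReduced_toWord FreeGroup.isReduced_toWord h)
    · intro y
      obtain ⟨w, hw, hwy⟩ := hsurj y
      refine ⟨FreeGroup.mk w, ?_⟩
      simp only [β0, FreeGroup.toWord_mk, hw.reduce_eq, hwy]
  refine ⟨Equiv.ofBijective β0 hbij, ?_⟩
  intro l g
  simp only [Equiv.ofBijective_apply, β0]
  by_cases h : g.toWord.head? = some (l.1, !l.2)
  · right
    have h4 := gvn_toWord_mul_cancel l g h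
    have h5 : FreeGroup.IsReduced ((l.1, !l.2) :: (FreeGroup.mk [l] * g).toWord) :=
      h4 ▸ FreeGroup.isReduced_toWord
    rw [h4]
    exact ⟨(hstep _ _ h5).1, (hstep _ _ h5).2.1⟩
  · left
    have h4 := gvn_toWord_mul l g h
    have h5 : FreeGroup.IsReduced (l :: g.toWord) := h4 ▸ FreeGroup.isReduced_toWord
    rw [h4]
    exact ⟨(hstep _ _ h5).1, (hstep _ _ h5).2.1⟩

/-- Heap trick: from a rooted tree with at least `m` children everywhere (`m+1` at the root) to one
with exactly `m` children everywhere (`m+1` at the root). -/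
theorem gvn_heap {X : Type*} (m : ℕ) (hm : 2 ≤ m) (r : X) (p : X → X) (dep : X → ℕ)
    (hdep : ∀ y, y ≠ r → dep y = dep (p y) + 1)
    (n : X → ℕ) (pos : X → ℕ)
    (hpos : ∀ v, Set.BijOn pos {y | y ≠ r ∧ p y = v} (Set.Iio (n v)))
    (hn : ∀ v, m ≤ n v) (hr : m + 1 ≤ n r) :
    ∃ (q : X → X) (idx : X → ℕ) (bd : X → ℕ), bd r = m + 1 ∧ (∀ x, x ≠ r → bd x = m) ∧
    (∀ y, y ≠ r → idx y < bd (q y)) ∧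
    (∀ x i, i < bd x → ∃ y, y ≠ r ∧ q y = x ∧ idx y = i) ∧
    (∀ y z, y ≠ r → z ≠ r → q y = q z → idx y = idx z → y = z) ∧
    (∀ P : X → Prop, P r → (∀ y, y ≠ r → P (q y) → P y) → ∀ y, P y) ∧
    (∀ y, y ≠ r → q y = p y ∨ (q y ≠ r ∧ p (q y) = p y)) := by
  classical
  let D : ℕ → X → ℕ := fun t =>
    Nat.rec (motive := fun _ => X → ℕ) (fun _ => m + 1) (fun _ f x =>
    if x = r then m + 1 else m - min (m - 1) (n (p x) - f (p x) - pos x * (m - 1))) t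
  have hDs : ∀ t x, D (t + 1) x = if x = r then m + 1 else
    m - min (m - 1) (n (p x) - D t (p x) - pos x * (m - 1)) := fun _ _ => rfl
  let d : X → ℕ := fun x => D (dep x) x
  have hdr : d r = m + 1 := by
    simp only [d]
    cases dep r with
    | zero => rfl
    | succ t => rw [hDs]; simp
  have hdx : ∀ x, x ≠ r → d x = m - min (m - 1) (n (p x) - d (p x) - pos x * (m - 1)) := by
    intro x hx
    simp only [d]
    rw [hdep x hx, hDs, if_neg hx]
  have hd1 : ∀ x, 1 ≤ d x := by
    intro x
    by_cases hx : x = r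
    · subst hx; omega
    · rw [hdx x hx]; omega
  have hdm : ∀ x, x ≠ r → d x ≤ m := by
    intro x hx
    rw [hdx x hx]; omega
  have hdn : ∀ x, d x ≤ n x := by
    intro x
    by_cases hx : x = r
    · subst hx; omega
    · exact (hdm x hx).trans (hn x)
  -- the children
  have hch : ∀ v j, j < n v → ∃ y, y ≠ r ∧ p y = v ∧ pos y = j := by
    intro v j hj
    obtain ⟨y, hy, hyj⟩ := (hpos v).surjOn hj
    exact ⟨y, hy.1, hy.2, hyj⟩
  choose ch hch using hch
  let c : X → ℕ → X := fun x i => if h : i < n x then ch x i h else r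
  have hc : ∀ x i, i < n x → c x i ≠ r ∧ p (c x i) = x ∧ pos (c x i) = i := by
    intro x i h
    simp only [c, dif_pos h]
    exact hch x i h
  have hlt : ∀ y, y ≠ r → pos y < n (p y) := fun y hy => (hpos (p y)).mapsTo ⟨hy, rfl⟩
  have hinj : ∀ y z, y ≠ r → z ≠ r → p y = p z → pos y = pos z → y = z := by
    intro y z hy hz h1 h2
    exact (hpos (p z)).injOn ⟨hy, h1⟩ ⟨hz, rfl⟩ h2
  let q : X → X := fun y => if (pos y : ℕ) < d (p y) then p y else c (p y) ((pos y - d (p y)) / (m - 1))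
  let idx : X → ℕ := fun y => if pos y < d (p y) then pos y else
    d (q y) + (pos y - d (p y)) % (m - 1)
  have hq1 : ∀ y, pos y < d (p y) → q y = p y ∧ idx y = pos y := by
    intro y h
    simp [q, idx, h]
  have hsm : ∀ y, ¬ pos y < d (p y) → (pos y - d (p y)) / (m - 1) < pos y := by
    intro y h
    have := hd1 (p y)
    have := Nat.div_le_self (pos y - d (p y)) (m - 1)
    omega
  have hq2 : ∀ y, y ≠ r → ¬ pos y < d (p y) → q y ≠ r ∧ p (q y) = p y ∧
      pos (q y) = (pos y - d (p y)) / (m - 1) ∧ idx y = d (q y) + (pos y - d (p y)) % (m - 1) := by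
    intro y hy h
    have e : q y = c (p y) ((pos y - d (p y)) / (m - 1)) := by simp only [q, if_neg h]
    have := hc (p y) _ ((hsm y h).trans (hlt y hy))
    rw [e]
    refine ⟨this.1, this.2.1, this.2.2, ?_⟩
    rw [← e]
    simp only [idx, if_neg h]
  -- division facts
  have hdiv : ∀ a, a = (a / (m - 1)) * (m - 1) + a % (m - 1) ∧ a % (m - 1) < m - 1 := by
    intro a
    refine ⟨?_, Nat.mod_lt _ (by omega)⟩
    rw [mul_comm]; exact (Nat.div_add_mod a (m - 1)).symm
  have hidx2 : ∀ y, y ≠ r → ¬ pos y < d (p y) → idx y < m := by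
    intro y hy h
    obtain ⟨a1, a2, a3, a4⟩ := hq2 y hy h
    have b := hdx _ a1
    rw [a2, a3] at b
    have h1 := hdiv (pos y - d (p y))
    have h2 := hlt y hy
    have h3 : (pos y - d (p y)) % (m - 1) <
      min (m - 1) (n (p y) - d (p y) - (pos y - d (p y)) / (m - 1) * (m - 1)) := by
      refine lt_min h1.2 ?_
      omega
    omega
  refine ⟨q, idx, fun x => if x = r then m + 1 else m, by simp, fun x hx => by simp [hx],
    ?_, ?_, ?_, ?_, ?_⟩
  · intro y hy
    by_cases h : pos y < d (p y)
    · rw [(hq1 y h).1, (hq1 y h).2]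
      dsimp only
      split_ifs with h0
      · rw [h0, hdr] at h; exact h
      · exact h.trans_le (hdm _ h0)
    · have := hidx2 y hy h
      dsimp only
      split_ifs <;> omega
  · intro x i hi
    by_cases h : i < d x
    · obtain ⟨a1, a2, a3⟩ := hc x i (h.trans_le (hdn x))
      have := hq1 (c x i) (by rw [a2, a3]; exact h)
      exact ⟨c x i, a1, by rw [this.1, a2], by rw [this.2, a3]⟩
    · have hx : x ≠ r := by
        rintro rfl
        simp at hi; omega
      simp only [if_neg hx] at hi
      have b := hdx x hx
      obtain ⟨t, rfl⟩ : ∃ t, i = d x + t := ⟨i - d x, by omega⟩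
      have ht : t < min (m - 1) (n (p x) - d (p x) - pos x * (m - 1)) := by omega
      have ht1 := lt_of_lt_of_le ht (min_le_left _ _)
      have ht2 := lt_of_lt_of_le ht (min_le_right _ _)
      have hj : d (p x) + (pos x * (m - 1) + t) < n (p x) := by omega
      obtain ⟨a1, a2, a3⟩ := hc (p x) _ hj
      set y := c (p x) (d (p x) + (pos x * (m - 1) + t)) with hy
      have hny : ¬ pos y < d (p y) := by rw [a2, a3]; omega
      obtain ⟨b1, b2, b3, b4⟩ := hq2 y a1 hny
      have e1 : pos y - d (p y) = t + (m - 1) * pos x := by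
        rw [a2, a3, mul_comm]; omega
      rw [e1, Nat.add_mul_div_left _ _ (by omega), Nat.div_eq_of_lt ht1, zero_add] at b3
      rw [e1, Nat.add_mul_mod_self_left, Nat.mod_eq_of_lt ht1] at b4
      have e2 : q y = x := hinj _ _ b1 hx (by rw [b2, a2]) b3
      exact ⟨y, a1, e2, by rw [b4, e2]⟩
  · intro y z hy hz hqq hii
    by_cases h : pos y < d (p y) <;> by_cases h' : pos z < d (p z)
    · have a := hq1 y h
      have b := hq1 z h'
      exact hinj y z hy hz (by rw [← a.1, ← b.1, hqq]) (by rw [← a.2, ← b.2, hii])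
    · exfalso
      have a := hq1 y h
      have b := hq2 z hz h'
      rw [← hqq, ← hii, a.1, a.2] at b
      omega
    · exfalso
      have a := hq1 z h'
      have b := hq2 y hy h
      rw [hqq, hii, a.1, a.2] at b
      omega
    · have a := hq2 y hy h
      have b := hq2 z hz h'
      have hpp : p y = p z := by rw [← a.2.1, ← b.2.1, hqq]
      refine hinj y z hy hz hpp ?_
      have h1 := hdiv (pos y - d (p y))
      have h2 := hdiv (pos z - d (p z))
      rw [← a.2.2.1] at h1
      rw [← b.2.2.1] at h2
      have e1 := a.2.2.2
      have e2 := b.2.2.2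
      rw [hqq] at e1 h1
      rw [hpp] at h h1 e1
      have : (pos y - d (p z)) % (m - 1) = (pos z - d (p z)) % (m - 1) := by omega
      rw [this] at h1
      omega
  · intro P h0 hs
    have key : ∀ t, ∀ s, ∀ y, dep y = t → pos y = s → P y := by
      intro t
      induction t using Nat.strong_induction_on with
      | _ t iht =>
      intro s
      induction s using Nat.strong_induction_on with
      | _ s ihs =>
      intro y hyt hys
      by_cases hy : y = r
      · rw [hy]; exact h0
      apply hs y hy
      have hd := hdep y hy
      by_cases h : pos y < d (p y)
      · rw [(hq1 y h).1]
        exact iht (dep (p y)) (by omega) _ _ rfl rfl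
      · obtain ⟨a1, a2, a3, _⟩ := hq2 y hy h
        have := hsm y h
        refine ihs (pos (q y)) (by omega) _ ?_ rfl
        have := hdep (q y) a1
        rw [a2] at this
        omega
    intro y
    exact key _ _ y rfl rfl
  · intro y hy
    by_cases h : pos y < d (p y)
    · left; exact (hq1 y h).1
    · right
      have := hq2 y hy h
      exact ⟨this.1, this.2.1⟩

theorem gvn_parent_unique {X : Type*} {T : SimpleGraph X} (hT : T.IsTree) (r y u v : X)
    (hu : T.Adj y u) (hv : T.Adj y v) (hdu : T.dist r y = T.dist r u + 1)
    (hdv : T.dist r y = T.dist r v + 1) : u = v := by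
  obtain ⟨q, hq, hql⟩ := (hT.connected r y).exists_path_of_dist
  have key : ∀ w, T.Adj y w → T.dist r y = T.dist r w + 1 → w = q.penultimate := by
    intro w hw hd
    obtain ⟨p, hp, hpl⟩ := (hT.connected r w).exists_path_of_dist
    have hmem : w ∈ q.support := by
      by_contra hne
      have h1 := hT.isAcyclic.mem_support_of_ne_mem_support_of_adj_of_isPath hp hq hw.symm hne
      have h2 := hT.isAcyclic.path_concat hq hp hw h1
      have h3 := congrArg SimpleGraph.Walk.length h2
      rw [SimpleGraph.Walk.length_concat] at h3
      omega
    exact hT.isAcyclic.eq_penultimate_of_adj_end hq hw hmem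
  rw [key u hu hdu, key v hv hdv]

/-- Rooting a locally finite tree of minimum degree at least `m + 1`. -/
theorem gvn_root {X : Type*} {T : SimpleGraph X} (hT : T.IsTree) (r : X) (m : ℕ)
    (hfin : ∀ x, {y | T.Adj x y}.Finite) (hdeg : ∀ x, m + 1 ≤ {y | T.Adj x y}.ncard) :
    ∃ (p : X → X) (dep : X → ℕ) (n : X → ℕ) (pos : X → ℕ),
      (∀ y, y ≠ r → dep y = dep (p y) + 1) ∧
      (∀ v, Set.BijOn pos {y | y ≠ r ∧ p y = v} (Set.Iio (n v))) ∧
      (∀ v, m ≤ n v) ∧ m + 1 ≤ n r ∧ (∀ y, y ≠ r → T.Adj y (p y)) := by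
  classical
  have hp : ∀ y, y ≠ r → ∃ u, T.Adj y u ∧ T.dist r y = T.dist r u + 1 := by
    intro y hy
    obtain ⟨q, hq, hql⟩ := (hT.connected r y).exists_path_of_dist
    have hnil : ¬ q.Nil := SimpleGraph.Walk.not_nil_of_ne (Ne.symm hy)
    have hadj : T.Adj y q.penultimate := (q.adj_penultimate hnil).symm
    refine ⟨_, hadj, ?_⟩
    have h1 : T.dist r q.penultimate ≤ q.dropLast.length := SimpleGraph.dist_le _
    have h2 : q.dropLast.length + 1 = q.length := by
      have h3 := SimpleGraph.Walk.concat_dropLast (p := q) (q.adj_penultimate hnil)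
      have := congrArg SimpleGraph.Walk.length h3
      rw [SimpleGraph.Walk.length_concat] at this
      exact this
    rcases hT.dist_eq_dist_add_one_of_adj r hadj with h | h <;> omega
  choose! p hpadj hpd using hp
  let C : X → Set X := fun v => {y | y ≠ r ∧ p y = v}
  have hCsub : ∀ v, C v ⊆ {y | T.Adj v y} := by
    rintro v y ⟨hy, rfl⟩
    exact (hpadj y hy).symm
  have hCfin : ∀ v, (C v).Finite := fun v => (hfin v).subset (hCsub v)
  have hsup : ∀ v y, T.Adj v y → y ∈ C v ∨ (v ≠ r ∧ y = p v) := by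
    intro v y h
    rcases hT.dist_eq_dist_add_one_of_adj r h with h1 | h1
    · right
      have hv : v ≠ r := by
        rintro rfl
        simp at h1
      exact ⟨hv, gvn_parent_unique hT r v y (p v) h (hpadj v hv) h1 (hpd v hv)⟩
    · left
      have hy : y ≠ r := by
        rintro rfl
        simp at h1
      exact ⟨hy, gvn_parent_unique hT r y (p y) v (hpadj y hy) h.symm (hpd y hy) h1⟩
  have hn : ∀ v, ∃ e : X → ℕ, Set.BijOn e (C v) (Set.Iio (C v).ncard) := by
    intro v
    obtain ⟨e, he⟩ := (hCfin v).exists_bijOn_of_encard_eq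
      (t := (Finset.range (C v).ncard : Set ℕ)) (by
        rw [Set.encard_coe_eq_coe_finsetCard, Finset.card_range, (hCfin v).cast_ncard_eq])
    exact ⟨e, by simpa using he⟩
  choose e he using hn
  refine ⟨p, fun x => T.dist r x, fun v => (C v).ncard, fun y => e (p y) y, hpd, ?_, ?_, ?_, hpadj⟩
  · intro v
    refine (he v).congr ?_
    rintro y ⟨_, rfl⟩
    rfl
  · intro v
    have h1 : {y | T.Adj v y} ⊆ insert (p v) (C v) := by
      intro y hy
      rcases hsup v y hy with h | h
      · exact Or.inr h
      · exact Or.inl h.2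
    have h2 := Set.ncard_le_ncard h1 ((hCfin v).insert _)
    have h3 := Set.ncard_insert_le (p v) (C v)
    have := hdeg v
    change m ≤ (C v).ncard
    omega
  · have h1 : {y | T.Adj r y} ⊆ C r := by
      intro y hy
      rcases hsup r y hy with h | h
      · exact h
      · exact absurd rfl h.1
    exact (hdeg r).trans (Set.ncard_le_ncard h1 (hCfin r))

/-- The functional graph of a map. -/
def gvnFun {X : Type*} (f : X → X) : SimpleGraph X :=
  SimpleGraph.fromRel (fun x y => f x = y)

theorem gvn_fun_acyclic {X : Type*} (f : X → X)
    (hf : ∀ x n, f^[n] (f x) = x → f x = x) : (gvnFun f).IsAcyclic := by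
  have key : ∀ x, f x ≠ x → (gvnFun f).IsBridge s(x, f x) := by
    intro x hx
    rw [SimpleGraph.isBridge_iff]
    rintro ⟨w⟩
    have hA : ∀ (a b : X) (w : ((gvnFun f).deleteEdges {s(x, f x)}).Walk a b),
        (∃ n, f^[n] a = x) → ∃ n, f^[n] b = x := by
      intro a b w
      induction w with
      | nil => exact id
      | cons h _ ih =>
        rename_i a c b
        rintro ⟨n, hn⟩
        apply ih
        rw [SimpleGraph.deleteEdges_adj] at h
        obtain ⟨h1, h2⟩ := h
        simp only [gvnFun, SimpleGraph.fromRel_adj] at h1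
        rcases h1 with ⟨hne, h1 | h1⟩
        · cases n with
          | zero =>
            exfalso
            apply h2
            simp at hn
            rw [← hn, h1]
            rfl
          | succ n =>
            refine ⟨n, ?_⟩
            rw [Function.iterate_succ_apply, h1] at hn
            exact hn
        · refine ⟨n + 1, ?_⟩
          rw [Function.iterate_succ_apply, h1, hn]
    obtain ⟨n, hn⟩ := hA _ _ w ⟨0, rfl⟩
    exact hx (hf x n hn)
  rw [SimpleGraph.isAcyclic_iff_forall_adj_isBridge]
  intro v w h
  simp only [gvnFun, SimpleGraph.fromRel_adj] at h
  rcases h with ⟨hne, h | h⟩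
  · subst h; exact key v (Ne.symm hne)
  · subst h
    rw [Sym2.eq_swap]
    exact key w hne

/-- From a bounded-displacement injection `X × Fin (m+2) → X`, an acyclic graph of degree at least
`m+1`. -/
theorem gvn_forest {X : Type*} (M : ℕ) (φ : X × Fin (M + 1) → X) (hφ : Function.Injective φ) :
    ∃ F : SimpleGraph X, F.IsAcyclic ∧ (∀ x y, F.Adj x y → (∃ i, φ (x, i) = y) ∨ ∃ i, φ (y, i) = x) ∧
      ∀ x, ∃ s : Finset X, s.card = M ∧ ∀ y ∈ s, F.Adj x y := by
  classical
  let f : X → X := fun y => if h : ∃ z, φ z = y then (Classical.choose h).1 else y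
  have hfφ : ∀ x i, f (φ (x, i)) = x := by
    intro x i
    have h : ∃ z, φ z = φ (x, i) := ⟨_, rfl⟩
    have h1 := Classical.choose_spec h
    have h2 := hφ h1
    simp only [f, dif_pos h]
    rw [h2]
  have hf : ∀ x y, f x = y → x = y ∨ ∃ i, φ (y, i) = x := by
    rintro x y rfl
    by_cases h : ∃ z, φ z = x
    · right
      obtain ⟨⟨a, i⟩, rfl⟩ := h
      rw [hfφ]
      exact ⟨i, rfl⟩
    · left
      simp only [f, dif_neg h]
  let P := Function.periodicPts f
  let f' : X → X := fun y => if y ∈ P then y else f y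
  have hf'cyc : ∀ x n, f'^[n] (f' x) = x → f' x = x := by
    intro x n hn
    by_cases hx : x ∈ P
    · simp [f', hx]
    · exfalso
      -- all iterates are outside P
      have hfix : ∀ a ∈ P, ∀ j, f'^[j] a = a := by
        intro a ha j
        exact Function.iterate_fixed (by simp [f', ha]) j
      have hn' : f'^[n + 1] x = x := hn
      have hout : ∀ j, j ≤ n + 1 → f'^[j] x ∉ P := by
        intro j hj hjP
        have h1 := hfix _ hjP (n + 1 - j)
        rw [← Function.iterate_add_apply, Nat.sub_add_cancel hj, hn'] at h1
        rw [← h1] at hjP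
        exact hx hjP
      have hag : ∀ j, j ≤ n + 1 → f'^[j] x = f^[j] x := by
        intro j
        induction j with
        | zero => intro _; rfl
        | succ j ih =>
          intro hj
          rw [Function.iterate_succ_apply', Function.iterate_succ_apply', ← ih (by omega)]
          have := hout j (by omega)
          simp only [f', if_neg this]
      apply hx
      refine ⟨n + 1, by omega, ?_⟩
      have := hag (n + 1) le_rfl
      rw [hn'] at this
      exact this.symm
  refine ⟨gvnFun f', gvn_fun_acyclic f' hf'cyc, ?_, ?_⟩
  · have key : ∀ x y, x ≠ y → f' x = y → ∃ i, φ (y, i) = x := by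
      intro x y hne h
      by_cases hx : x ∈ P
      · simp only [f', if_pos hx] at h; exact absurd h hne
      · simp only [f', if_neg hx] at h
        exact (hf x y h).resolve_left hne
    intro x y h
    simp only [gvnFun, SimpleGraph.fromRel_adj] at h
    rcases h with ⟨hne, h | h⟩
    · right; exact key x y hne h
    · left; exact key y x hne.symm h
  · intro x
    let t : Finset X := Finset.univ.image (fun i => φ (x, i))
    have ht : t.card = M + 1 := by
      rw [Finset.card_image_of_injective]
      · simp
      · intro i j h
        have := hφ h
        simpa using this
    let t' := t.filter (fun y => y ∉ P)
    have hb : (t.filter (fun y => y ∈ P)).card ≤ 1 := by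
      rw [Finset.card_le_one]
      intro a ha b hb
      simp only [Finset.mem_filter, t, Finset.mem_image, Finset.mem_univ, true_and] at ha hb
      obtain ⟨⟨i, hi⟩, ha⟩ := ha
      obtain ⟨⟨j, hj⟩, hb⟩ := hb
      refine (Function.bijOn_periodicPts f).injOn ha hb ?_
      rw [← hi, ← hj, hfφ, hfφ]
    have hsum := Finset.card_filter_add_card_filter_not (s := t) (fun y => y ∈ P)
    have ht' : M ≤ t'.card := by
      simp only [t']
      omega
    obtain ⟨s, hs, hsc⟩ := Finset.exists_subset_card_eq ht'
    refine ⟨s, hsc, ?_⟩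
    intro y hy
    have hy' := hs hy
    simp only [t', Finset.mem_filter, t, Finset.mem_image, Finset.mem_univ, true_and] at hy'
    obtain ⟨⟨i, hi⟩, hyP⟩ := hy'
    have hfy : f y = x := by rw [← hi, hfφ]
    simp only [gvnFun, SimpleGraph.fromRel_adj]
    refine ⟨?_, Or.inr (by simp only [f', if_neg hyP, hfy])⟩
    rintro rfl
    exact hyP ⟨1, by omega, hfy⟩

/-- In a group which is non-amenable, finite sets expand by an arbitrary factor. -/
theorem gvn_expand {G : Type*} [Group G] [DecidableEq G] (S : Set G) (hS : S.Finite)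
    (h : GraphNonamenable (cayleyGraph S)) (M : ℕ) :
    ∃ B : Finset G, ∀ A : Finset G, M * A.card ≤ (A * B).card := by
  obtain ⟨C, hC, k, hk⟩ := h
  let E : Finset G := insert 1 (hS.toFinset ∪ hS.toFinset⁻¹)
  have hE1 : (1 : G) ∈ E := by simp [E]
  have hE : ∀ a b, (cayleyGraph S).Adj a b → a⁻¹ * b ∈ E := by
    intro a b hab
    simp only [cayleyGraph, SimpleGraph.fromRel_adj, Set.mem_union, Set.mem_inv, mul_inv_rev,
      inv_inv] at hab
    simp only [E, Finset.mem_insert, Finset.mem_union, Finset.mem_inv', Set.Finite.mem_toFinset,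
      mul_inv_rev, inv_inv]
    tauto
  have hw : ∀ a b, ∀ w : (cayleyGraph S).Walk a b, a⁻¹ * b ∈ E ^ w.length := by
    intro a b w
    induction w with
    | nil => simp
    | cons h w ih =>
      rename_i a c b
      rw [SimpleGraph.Walk.length_cons, pow_succ']
      have : a⁻¹ * b = (a⁻¹ * c) * (c⁻¹ * b) := by group
      rw [this]
      exact Finset.mul_mem_mul (hE _ _ h) ih
  have hstep : ∀ A : Finset G, C * A.card ≤ ((A * E ^ k).card : ℝ) := by
    intro A
    have hsub : nbhd (cayleyGraph S) k A ⊆ ((A * E ^ k : Finset G) : Set G) := by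
      rintro v ⟨s, hs, hr, hd⟩
      obtain ⟨w, hwl⟩ := hr.exists_walk_length_eq_dist
      have h1 := hw _ _ w
      have h2 : E ^ w.length ⊆ E ^ k := Finset.pow_subset_pow_right hE1 (by omega)
      have : v = s * (s⁻¹ * v) := by group
      rw [Finset.mem_coe, this]
      exact Finset.mul_mem_mul hs (h2 h1)
    have hfin := (A * E ^ k : Finset G).finite_toSet.subset hsub
    have h1 := (hk A).resolve_left (fun h => h hfin)
    have h2 := Set.ncard_le_ncard hsub (Finset.finite_toSet _)
    rw [Set.ncard_coe_finset] at h2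
    exact h1.trans (by exact_mod_cast h2)
  have hit : ∀ j : ℕ, ∀ A : Finset G, C ^ j * A.card ≤ ((A * (E ^ k) ^ j).card : ℝ) := by
    intro j
    induction j with
    | zero => intro A; simp
    | succ j ih =>
      intro A
      rw [pow_succ (E ^ k), ← mul_assoc]
      refine le_trans ?_ (hstep _)
      rw [pow_succ', mul_assoc]
      exact mul_le_mul_of_nonneg_left (ih A) (by linarith)
  obtain ⟨j, hj⟩ := pow_unbounded_of_one_lt (M : ℝ) hC
  refine ⟨(E ^ k) ^ j, fun A => ?_⟩
  have h1 := hit j A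
  have h2 : (M : ℝ) * A.card ≤ C ^ j * A.card :=
    mul_le_mul_of_nonneg_right hj.le (Nat.cast_nonneg _)
  exact_mod_cast h2.trans h1

theorem gvn_hall {G : Type*} [Group G] [DecidableEq G] (M : ℕ) (B : Finset G)
    (hB : ∀ A : Finset G, M * A.card ≤ (A * B).card) :
    ∃ φ : G × Fin M → G, Function.Injective φ ∧ ∀ x i, x⁻¹ * φ (x, i) ∈ B := by
  obtain ⟨φ, h1, h2⟩ := (Finset.all_card_le_biUnion_card_iff_exists_injective
    (fun z : G × Fin M => z.1 • B)).1 (by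
      intro s
      have e1 : s.card ≤ M * (s.image Prod.fst).card := by
        have : s ⊆ (s.image Prod.fst) ×ˢ (Finset.univ : Finset (Fin M)) := by
          intro z hz
          simp only [Finset.mem_product, Finset.mem_univ, and_true]
          exact Finset.mem_image_of_mem _ hz
        have := Finset.card_le_card this
        rw [Finset.card_product, Finset.card_univ, Fintype.card_fin, mul_comm] at this
        exact this
      refine e1.trans ((hB _).trans (Finset.card_le_card ?_))
      intro v hv
      obtain ⟨a, ha, b, hb, rfl⟩ := Finset.mem_mul.1 hv
      obtain ⟨z, hz, rfl⟩ := Finset.mem_image.1 ha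
      exact Finset.mem_biUnion.2 ⟨z, hz, Finset.smul_mem_smul_finset hb⟩)
  refine ⟨φ, h1, fun x i => ?_⟩
  obtain ⟨b, hb, hbe⟩ := Finset.mem_smul_finset.1 (h2 (x, i))
  rw [← hbe]
  simpa using hb

theorem gvn_connected {G : Type*} [Group G] (S : Set G) (hS : Subgroup.closure S = ⊤) :
    (cayleyGraph S).Connected := by
  have hstep : ∀ g s : G, s ∈ S ∪ S⁻¹ → (cayleyGraph S).Reachable g (g * s) := by
    intro g s hs
    by_cases h : g = g * s
    · rw [← h]
    · apply SimpleGraph.Adj.reachable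
      rw [cayleyGraph, SimpleGraph.fromRel_adj]
      exact ⟨h, Or.inl (by simpa using hs)⟩
  have key : ∀ x : G, ∀ g, (cayleyGraph S).Reachable g (g * x) := by
    intro x
    have hx : x ∈ Subgroup.closure S := by rw [hS]; trivial
    induction hx using Subgroup.closure_induction with
    | mem x hx => intro g; exact hstep g x (Or.inl hx)
    | one => intro g; simp
    | mul x y _ _ hx hy =>
      intro g
      rw [← mul_assoc]
      exact (hx g).trans (hy (g * x))
    | inv x _ hx =>
      intro g
      have := hx (g * x⁻¹)
      rw [inv_mul_cancel_right] at this
      exact this.symm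
  have : Nonempty G := ⟨1⟩
  refine SimpleGraph.Connected.mk ?_
  intro a b
  have := key (a⁻¹ * b) a
  rwa [mul_inv_cancel_left] at this

/-- An action all of whose elements have finitely many displacements is bounded. -/
theorem gvn_bounded {G H : Type*} [Group G] [Group H] (a : RightAction H G) (S : Set G) (h : H)
    (hf : {g | ∃ x, g = x⁻¹ * a.act x h}.Finite) :
    ∃ C : ℝ, ∀ x : G, wordMetric S x (a.act x h) ≤ C := by
  obtain ⟨C, hC⟩ := (hf.image (fun g => wordMetric S 1 g)).bddAbove
  refine ⟨C, fun x => ?_⟩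
  have : wordMetric S x (a.act x h) = wordMetric S 1 (x⁻¹ * a.act x h) := by
    simp [wordMetric, wordDist]
  rw [this]
  exact hC ⟨_, ⟨x, rfl⟩, rfl⟩

theorem gvn_forward {G : Type*} [Group G] [Group.FG G] (k : ℕ) (hk : 2 ≤ k)
    (hG : GroupNonamenable G) :
    ∃ a : RightAction (FreeGroup (Fin k)) G, a.IsTransitive ∧
         ∀ S : Set G, IsFinGenSet S → a.IsTranslationLike (wordMetric S) := by
  classical
  obtain ⟨S, hS⟩ := Group.FG.out (G := G)
  obtain ⟨B, hB⟩ := gvn_expand (S : Set G) S.finite_toSet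
    (hG _ ⟨S.finite_toSet, hS⟩) (2 * k + 1)
  obtain ⟨φ, hφ, hφB⟩ := gvn_hall _ B hB
  obtain ⟨F, hF, hFadj, hFdeg⟩ := gvn_forest (2 * k) φ hφ
  let U : Finset G := S ∪ B
  have hU : (cayleyGraph (U : Set G)).Connected := by
    apply gvn_connected
    rw [eq_top_iff, ← hS]
    apply Subgroup.closure_mono
    simp [U]
  have hFU : F ≤ cayleyGraph (U : Set G) := by
    intro x y h
    rw [cayleyGraph, SimpleGraph.fromRel_adj]
    refine ⟨h.ne, ?_⟩
    rcases hFadj x y h with ⟨i, rfl⟩ | ⟨i, rfl⟩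
    · left; left
      have := hφB x i
      simp only [U, Finset.coe_union]
      exact Or.inr this
    · right; left
      have := hφB y i
      simp only [U, Finset.coe_union]
      exact Or.inr this
  obtain ⟨T, hFT, hTU, hT⟩ := hU.exists_isTree_le_of_le_of_isAcyclic hFU hF
  let E : Finset G := U ∪ U⁻¹
  have hEinv : ∀ g, g ∈ E → g⁻¹ ∈ E := by
    intro g hg
    simp only [E, Finset.mem_union, Finset.mem_inv', inv_inv] at hg ⊢
    tauto
  have hTE : ∀ x y, T.Adj x y → x⁻¹ * y ∈ E := by
    intro x y h
    have h1 := hTU h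
    rw [cayleyGraph, SimpleGraph.fromRel_adj] at h1
    simp only [Set.mem_union, Set.mem_inv, mul_inv_rev, inv_inv, Finset.mem_coe] at h1
    simp only [E, Finset.mem_union, Finset.mem_inv', mul_inv_rev, inv_inv]
    tauto
  have hTfin : ∀ x, {y | T.Adj x y}.Finite := by
    intro x
    refine (x • E).finite_toSet.subset ?_
    intro y hy
    rw [Finset.mem_coe, Finset.mem_smul_finset]
    exact ⟨_, hTE x y hy, by simp⟩
  have hTdeg : ∀ x, (2 * k - 1) + 1 ≤ {y | T.Adj x y}.ncard := by
    intro x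
    obtain ⟨s, hs, hsF⟩ := hFdeg x
    have h1 : (s : Set G) ⊆ {y | T.Adj x y} := fun y hy => hFT (hsF y hy)
    have h2 := Set.ncard_le_ncard h1 (hTfin x)
    rw [Set.ncard_coe_finset] at h2
    omega
  obtain ⟨p, dep, n, pos, hdep, hpos, hn, hr, hpadj⟩ := gvn_root hT 1 (2 * k - 1) hTfin hTdeg
  obtain ⟨q, idx, bd, hbr, hbx, h1, h2, h3, hind, hqp⟩ :=
    gvn_heap (2 * k - 1) (by omega) 1 p dep hdep n pos hpos hn hr
  obtain ⟨β, hβ⟩ := gvn_bij k 1 q idx bd (by rw [hbr]; omega) hbx h1 h2 h3 hind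
  let K : Finset G := E ∪ E * E
  have hKinv : ∀ g, g ∈ K → g⁻¹ ∈ K := by
    intro g hg
    rcases Finset.mem_union.1 hg with h | h
    · exact Finset.mem_union_left _ (hEinv _ h)
    · obtain ⟨a, ha, b, hb, rfl⟩ := Finset.mem_mul.1 h
      rw [mul_inv_rev]
      exact Finset.mem_union_right _ (Finset.mul_mem_mul (hEinv _ hb) (hEinv _ ha))
  have hqK : ∀ y, y ≠ 1 → y⁻¹ * q y ∈ K := by
    intro y hy
    rcases hqp y hy with h | ⟨h, h'⟩
    · rw [h]
      exact Finset.mem_union_left _ (hTE _ _ (hpadj y hy))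
    · have e : y⁻¹ * q y = (y⁻¹ * p y) * ((p (q y))⁻¹ * q y) := by rw [h']; group
      rw [e]
      exact Finset.mem_union_right _ (Finset.mul_mem_mul (hTE _ _ (hpadj y hy))
        (hTE _ _ (hpadj _ h).symm))
  have hβK : ∀ l g, (β g)⁻¹ * β (FreeGroup.mk [l] * g) ∈ K := by
    intro l g
    rcases hβ l g with ⟨a, b⟩ | ⟨a, b⟩
    · have := hKinv _ (hqK _ a)
      rw [b, mul_inv_rev, inv_inv] at this
      exact this
    · rw [← b]
      exact hqK _ a
  have hfin : ∀ h : FreeGroup (Fin k), {g | ∃ x, g = (β x)⁻¹ * β (h * x)}.Finite := by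
    intro h
    rw [← FreeGroup.mk_toWord (x := h)]
    induction h.toWord with
    | nil =>
      refine (Set.finite_singleton (1 : G)).subset ?_
      rintro g ⟨x, rfl⟩
      have : (FreeGroup.mk [] : FreeGroup (Fin k)) = 1 := rfl
      simp [this]
    | cons l w ih =>
      refine (ih.mul K.finite_toSet).subset ?_
      rintro g ⟨x, rfl⟩
      have e : FreeGroup.mk (l :: w) = FreeGroup.mk [l] * FreeGroup.mk w := by
        rw [FreeGroup.mul_mk]; rfl
      refine Set.mem_mul.2 ⟨_, ⟨x, rfl⟩, _, hβK l (FreeGroup.mk w * x), ?_⟩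
      rw [e, mul_assoc (FreeGroup.mk [l])]
      group
  let a : RightAction (FreeGroup (Fin k)) G :=
    { act := fun x h => β (h⁻¹ * β.symm x)
      act_one := by intro x; simp
      act_mul := by intro x h k; simp [mul_assoc] }
  have hact : ∀ x h, a.act x h = β (h⁻¹ * β.symm x) := fun _ _ => rfl
  refine ⟨a, ?_, ?_⟩
  · intro x y
    refine ⟨β.symm x * (β.symm y)⁻¹, ?_⟩
    rw [hact]; simp
  · intro S' _
    refine ⟨?_, ?_⟩
    · intro x h hx
      rw [hact] at hx
      have := congrArg β.symm hx
      simpa using this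
    · intro h
      apply gvn_bounded
      refine (hfin h⁻¹).subset ?_
      rintro g ⟨x, rfl⟩
      exact ⟨β.symm x, by rw [hact]; simp⟩

/-- An equivariant map to the free group from a free action. -/
theorem gvn_equivariant {H X : Type*} [Group H] (a : RightAction H X)
    (hfree : ∀ (x : X) (h : H), a.act x h = x → h = 1) :
    ∃ w : X → H, ∀ x h, w (a.act x h) = w x * h := by
  let s : Setoid X :=
    { r := fun x y => ∃ h, a.act x h = y
      iseqv :=
        { refl := fun x => ⟨1, a.act_one x⟩
          symm := by
            rintro x y ⟨h, rfl⟩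
            exact ⟨h⁻¹, by rw [a.act_mul, mul_inv_cancel, a.act_one]⟩
          trans := by
            rintro x y z ⟨h, rfl⟩ ⟨k, rfl⟩
            exact ⟨h * k, by rw [a.act_mul]⟩ } }
  let rep : X → X := fun x => (Quotient.mk s x).out
  have hrep : ∀ x, ∃ h, a.act (rep x) h = x := fun x => Quotient.mk_out (s := s) x
  choose w hw using hrep
  refine ⟨w, fun x h => ?_⟩
  have e : rep (a.act x h) = rep x := by
    have : Quotient.mk s (a.act x h) = Quotient.mk s x := 
      (Quotient.sound (show s.r x (a.act x h) from ⟨h, rfl⟩)).symm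
    simp only [rep, this]
  have h1 := hw (a.act x h)
  rw [e] at h1
  have h2 : a.act (rep x) (w x * h) = a.act x h := by rw [← a.act_mul, hw]
  have h3 : a.act (rep x) (w (a.act x h) * (w x * h)⁻¹) = rep x := by
    rw [← a.act_mul, h1, ← h2, a.act_mul, mul_inv_cancel, a.act_one]
  exact mul_inv_eq_one.1 (hfree _ _ h3)

theorem gvn_dist {G : Type*} [Group G] (S : Set G) (n : ℕ) (x g : G) (hg : g ∈ (S ∪ S⁻¹) ^ n) :
    ∃ w : (cayleyGraph S).Walk x (x * g), w.length ≤ n := by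
  induction n generalizing x g with
  | zero =>
    simp at hg
    subst hg
    rw [mul_one]
    exact ⟨SimpleGraph.Walk.nil, by simp⟩
  | succ n ih =>
    rw [pow_succ'] at hg
    obtain ⟨s, hs, t, ht, rfl⟩ := Set.mem_mul.1 hg
    have hex := ih (x * s) t ht
    rw [← mul_assoc]
    by_cases h : x = x * s
    · rw [← h] at hex ⊢
      obtain ⟨w, hw⟩ := hex
      exact ⟨w, by omega⟩
    · have hadj : (cayleyGraph S).Adj x (x * s) := by
        rw [cayleyGraph, SimpleGraph.fromRel_adj]
        exact ⟨h, Or.inl (by simpa using hs)⟩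
      obtain ⟨w, hw⟩ := hex
      exact ⟨SimpleGraph.Walk.cons hadj w, by rw [SimpleGraph.Walk.length_cons]; omega⟩

theorem gvn_exists_pow {G : Type*} [Group G] (S : Set G) (hS : Subgroup.closure S = ⊤) (g : G) :
    ∃ n : ℕ, g ∈ (S ∪ S⁻¹) ^ n := by
  have hg : g ∈ Subgroup.closure S := by rw [hS]; trivial
  induction hg using Subgroup.closure_induction with
  | mem x hx => exact ⟨1, by rw [pow_one]; exact Or.inl hx⟩
  | one => exact ⟨0, by simp⟩
  | mul x y _ _ hx hy =>
    obtain ⟨a, ha⟩ := hx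
    obtain ⟨b, hb⟩ := hy
    exact ⟨a + b, by rw [pow_add]; exact Set.mul_mem_mul ha hb⟩
  | inv x _ hx =>
    obtain ⟨a, ha⟩ := hx
    refine ⟨a, ?_⟩
    have : (S ∪ S⁻¹) = (S ∪ S⁻¹)⁻¹ := by rw [Set.union_inv, inv_inv, Set.union_comm]
    rw [this, inv_pow, Set.mem_inv, inv_inv]
    exact ha

theorem gvn_backward {G : Type*} [Group G] (k : ℕ) (hk : 2 ≤ k)
    (a : RightAction (FreeGroup (Fin k)) G)
    (ha : ∀ S : Set G, IsFinGenSet S → a.IsTranslationLike (wordMetric S)) :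
    GroupNonamenable G := by
  classical
  intro S hS
  obtain ⟨hfree, hbd⟩ := ha S hS
  obtain ⟨w, hw⟩ := gvn_equivariant a hfree
  choose C hC using hbd
  let L : Fin k × Bool → FreeGroup (Fin k) := fun l => FreeGroup.mk [l]
  -- a uniform bound
  obtain ⟨N, hN⟩ : ∃ N : ℕ, ∀ l : Fin k × Bool, C (L l)⁻¹ ≤ N := by
    obtain ⟨M, hM⟩ := (Set.finite_range (fun l => C (L l)⁻¹)).bddAbove
    obtain ⟨N, hN⟩ := exists_nat_ge M
    exact ⟨N, fun l => (hM ⟨l, rfl⟩).trans hN⟩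
  have hnb : ∀ (A : Finset G) (l : Fin k × Bool), ∀ x ∈ A,
      a.act x (L l)⁻¹ ∈ nbhd (cayleyGraph S) N A := by
    intro A l x hx
    have h1 : wordDist S x (a.act x (L l)⁻¹) ≤ N := by
      have := (hC (L l)⁻¹ x).trans (hN l)
      simp only [wordMetric] at this
      exact_mod_cast this
    have h2 : x⁻¹ * a.act x (L l)⁻¹ ∈ (S ∪ S⁻¹) ^ wordDist S x (a.act x (L l)⁻¹) :=
      Nat.sInf_mem (gvn_exists_pow S hS.2 _)
    have hex := gvn_dist S _ x _ h2
    rw [mul_inv_cancel_left] at hex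
    obtain ⟨v, hv⟩ := hex
    exact ⟨x, hx, ⟨v⟩, (SimpleGraph.dist_le v).trans (hv.trans h1)⟩
  let u : G → FreeGroup (Fin k) := fun x => (w x)⁻¹
  have hu : ∀ x l, u (a.act x (L l)⁻¹) = L l * u x := by
    intro x l
    simp [u, hw]
  -- the letter to use
  let lt : Fin k → G → Fin k × Bool := fun i x =>
    if (u x).toWord.head? = some (i, false) then (i, false) else (i, true)
  let c : Fin k → G → G := fun i x => a.act x (L (lt i x))⁻¹
  have hcu : ∀ i x, (u (c i x)).toWord.head? = some (lt i x) := by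
    intro i x
    simp only [c]
    rw [hu]
    rw [gvn_toWord_mul]
    · simp
    · simp only [lt]
      split_ifs with h
      · rw [h]; simp
      · simpa using h
  have hlt1 : ∀ i x, (lt i x).1 = i := by
    intro i x
    simp only [lt]
    split_ifs <;> rfl
  have hcinj : ∀ i, Function.Injective (c i) := by
    intro i x y hxy
    have h1 := hcu i x
    rw [hxy, hcu i y] at h1
    have h2 : lt i y = lt i x := by simpa using h1
    simp only [c] at hxy
    rw [h2] at hxy
    have h3 := congrArg (fun z => a.act z (L (lt i x))) hxy
    simpa [a.act_mul, a.act_one] using h3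
  have hcdis : ∀ i j x y, i ≠ j → c i x ≠ c j y := by
    intro i j x y hij h
    have h1 := hcu i x
    rw [h, hcu j y] at h1
    have h2 : lt j y = lt i x := by simpa using h1
    apply hij
    rw [← hlt1 i x, ← h2, hlt1]
  refine ⟨2, by norm_num, N, fun A => ?_⟩
  by_cases hinf : (nbhd (cayleyGraph S) N A).Infinite
  · exact Or.inl hinf
  right
  rw [Set.not_infinite] at hinf
  let i0 : Fin k := ⟨0, by omega⟩
  let i1 : Fin k := ⟨1, by omega⟩
  have h01 : i0 ≠ i1 := by simp [i0, i1]
  let I := A.image (c i0) ∪ A.image (c i1)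
  have hI : I.card = 2 * A.card := by
    rw [Finset.card_union_of_disjoint, Finset.card_image_of_injective _ (hcinj i0),
      Finset.card_image_of_injective _ (hcinj i1)]
    · ring
    · rw [Finset.disjoint_left]
      intro z hz hz'
      obtain ⟨x, _, rfl⟩ := Finset.mem_image.1 hz
      obtain ⟨y, _, hy⟩ := Finset.mem_image.1 hz'
      exact hcdis i0 i1 x y h01 hy.symm
  have hsub : (I : Set G) ⊆ nbhd (cayleyGraph S) N A := by
    intro z hz
    rcases Finset.mem_union.1 (Finset.mem_coe.1 hz) with h | h
    · obtain ⟨x, hx, rfl⟩ := Finset.mem_image.1 h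
      exact hnb A _ x hx
    · obtain ⟨x, hx, rfl⟩ := Finset.mem_image.1 h
      exact hnb A _ x hx
  have h1 := Set.ncard_le_ncard hsub hinf
  rw [Set.ncard_coe_finset, hI] at h1
  exact_mod_cast h1

/-- **Geometric von Neumann Conjecture.** For a finitely generated group `G` and `k ≥ 2`,
the following are equivalent: `G` is non-amenable; `G` admits a translation-like action by
the free group `F_k`; `G` admits a transitive translation-like action by `F_k`. -/
theorem geometric_von_neumann (G : Type*) [Group G] [Group.FG G] (k : ℕ) (hk : 2 ≤ k) :
    List.TFAE
      [GroupNonamenable G,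
       ∃ a : RightAction (FreeGroup (Fin k)) G,
         ∀ S : Set G, IsFinGenSet S → a.IsTranslationLike (wordMetric S),
       ∃ a : RightAction (FreeGroup (Fin k)) G, a.IsTransitive ∧
         ∀ S : Set G, IsFinGenSet S → a.IsTranslationLike (wordMetric S)] := by
  tfae_have 1 → 3 := gvn_forward k hk
  tfae_have 3 → 2 := fun ⟨a, _, h⟩ => ⟨a, h⟩
  tfae_have 2 → 1 := fun ⟨a, h⟩ => gvn_backward k hk a h
  tfae_finish
end
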